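/- arXiv:1603.03138 — 3 statements merged into one kernel-verified Lean document; each statement's English description precedes it below -/
import Mathlib

section
/- Let (W,S) be a Coxeter group, w ∈ W, and (s,t) ∈ 𝔐. Let →a and →b be reduced expressions for w such that →b is obtained from →a by an (s,t)-braid move, and let q ∈ W be such that Invs →b is obtained from Invs →a by replacing a factor equal to q ρ_{s,t} q⁻¹ by its reversal. Set s' = qsq⁻¹ and t' = qtq⁻¹. Then Has →b = Has →a − (s',t') + (t',s') in the free ℤ-module ℤ[𝔑]. -/
open scoped Classical

/-- The word `(s, t, s, t, …)` with `m` letters. -/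
def altList {α : Type*} (s t : α) (m : ℕ) : List α :=
  (List.range m).map (fun k => if k % 2 = 0 then s else t)

/-- The word `ρ_{s,t} = ((st)^0 s, (st)^1 s, …, (st)^{m-1} s)`. -/
def rhoWord {W : Type*} [Group W] (s t : W) (m : ℕ) : List W :=
  (List.range m).map (fun k => (s * t) ^ k * s)

/-- `b` is obtained from `a` by an `(s_i, s_j)`-braid move: a factor
`(i,j,i,j,…)` of length `M i j` of `a` is replaced by `(j,i,j,i,…)`. -/
def IsBraidMove {B W : Type*} [Group W] {M : CoxeterMatrix B}
    (cs : CoxeterSystem M W) (i j : B) (a b : List B) : Prop :=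
  i ≠ j ∧ M.M i j ≠ 0 ∧
  ∃ p : ℕ, p + M.M i j ≤ a.length ∧
    a = a.take p ++ altList i j (M.M i j) ++ a.drop (p + M.M i j) ∧
    b = a.take p ++ altList j i (M.M i j) ++ a.drop (p + M.M i j)

/-- The set `𝔑 = ⋃_{x ∈ W} x 𝔐 x⁻¹` of pairs of reflections componentwise conjugate to
a pair in `𝔐 = {(s_i, s_j) : i ≠ j, M i j ≠ 0}`. -/
def NSet {B W : Type*} [Group W] {M : CoxeterMatrix B}
    (cs : CoxeterSystem M W) : Set (W × W) :=
  {p | ∃ (x : W) (i j : B), i ≠ j ∧ M.M i j ≠ 0 ∧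
    p.1 = x * cs.simple i * x⁻¹ ∧ p.2 = x * cs.simple j * x⁻¹}

/-- `HasFn cs ω : W × W → ℤ` is the coordinate vector of `Has →ω ∈ ℤ[𝔑]`: its value at
`(u, v)` is `1` if `ρ_{u,v}` appears as a subword of the inversion word of `ω`, else `0`. -/
noncomputable def HasFn {B W : Type*} [Group W] {M : CoxeterMatrix B}
    (cs : CoxeterSystem M W) (ω : List B) : W × W → ℤ :=
  fun p => if List.Sublist (rhoWord p.1 p.2 (orderOf (p.1 * p.2))) (cs.leftInvSeq ω)
    then 1 else 0

namespace BraidHas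

variable {B W : Type*} [Group W] {M : CoxeterMatrix B} (cs : CoxeterSystem M W)

/-- The action of a simple reflection on `W × ℤ/2`. -/
noncomputable def act (i : B) : Function.End (W × ZMod 2) :=
  fun p => (cs.simple i * p.1 * cs.simple i, p.2 + if p.1 = cs.simple i then 1 else 0)

theorem act_pow (i j : B) (n : ℕ) (p : W × ZMod 2) :
    ((act cs i * act cs j) ^ n) p =
      ((cs.simple i * cs.simple j) ^ n * p.1 * ((cs.simple i * cs.simple j) ^ n)⁻¹,
        p.2 + ∑ d ∈ Finset.range (2 * n),
          if p.1 = cs.simple j * (cs.simple i * cs.simple j) ^ d then 1 else 0) := by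
  induction n with
  | zero => simp [Function.End.one_def]
  | succ n ih =>
    rw [pow_succ']
    change (act cs i * act cs j) (((act cs i * act cs j) ^ n) p) = _
    rw [ih]
    set r := cs.simple i * cs.simple j with hr
    have hri : r⁻¹ = cs.simple j * cs.simple i := by simp [hr]
    have hconj : ∀ c : ℕ, cs.simple j * r ^ c = (r ^ c)⁻¹ * cs.simple j := by
      intro c
      induction c with
      | zero => simp
      | succ c ihc =>
        rw [pow_succ, ← mul_assoc, ihc, mul_inv_rev, hri, hr]
        have : (r ^ c)⁻¹ * cs.simple j * cs.simple i = cs.simple j * cs.simple i * (r ^ c)⁻¹ := by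
          rw [mul_assoc, ← hri, ← mul_inv_rev, ← mul_inv_rev, ← pow_succ, ← pow_succ']
        rw [← this]
        simp [mul_assoc, ← hr]
    have e1 : (r ^ n * p.1 * (r ^ n)⁻¹ = cs.simple j) ↔ p.1 = cs.simple j * r ^ (2 * n) := by
      rw [two_mul, pow_add, ← mul_assoc, hconj]
      constructor
      · intro h; rw [← h]; group
      · intro h; rw [h]; group
    have e2 : (cs.simple j * (r ^ n * p.1 * (r ^ n)⁻¹) * cs.simple j = cs.simple i) ↔
        p.1 = cs.simple j * r ^ (2 * n + 1) := by
      have h1 : cs.simple j * r ^ (2 * n + 1) =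
          (r ^ n)⁻¹ * (cs.simple j * cs.simple i * cs.simple j) * r ^ n := by
        rw [show 2 * n + 1 = n + 1 + n by ring, pow_add, pow_succ, ← mul_assoc, ← mul_assoc, hconj,
          hr]
        simp [mul_assoc]
      rw [h1]
      constructor
      · intro h
        rw [← h]
        simp [mul_assoc]
      · intro h; rw [h]; simp [mul_assoc]
    change (_, _) = _
    refine Prod.ext ?_ ?_
    · change cs.simple i * (cs.simple j * (r ^ n * p.1 * (r ^ n)⁻¹) * cs.simple j) * cs.simple i = _
      rw [pow_succ', mul_inv_rev, hri, hr]
      simp [mul_assoc]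
    · change _ + (if r ^ n * p.1 * (r ^ n)⁻¹ = cs.simple j then 1 else 0) +
        (if cs.simple j * (r ^ n * p.1 * (r ^ n)⁻¹) * cs.simple j = cs.simple i then 1 else 0) = _
      rw [show 2 * (n + 1) = 2 * n + 1 + 1 by ring, Finset.sum_range_succ, Finset.sum_range_succ]
      simp only [e1, e2]
      ring

theorem act_liftable : M.IsLiftable (act cs) := by
  intro i j
  funext p
  rw [act_pow, cs.simple_mul_simple_pow]
  refine Prod.ext (by simp [Function.End.one_def]) ?_
  change p.2 + _ = p.2
  rw [two_mul, Finset.sum_range_add]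
  simp only [pow_add, cs.simple_mul_simple_pow, one_mul]
  rw [CharTwo.add_self_eq_zero, add_zero]

/-- The action of `W` on `W × ℤ/2`. -/
noncomputable def phi : W →* Function.End (W × ZMod 2) := cs.lift ⟨act cs, act_liftable cs⟩

theorem phi_simple (i : B) : phi cs (cs.simple i) = act cs i := cs.lift_apply_simple _ _

/-- The reflection cocycle. -/
noncomputable def eta (w t : W) : ZMod 2 := (phi cs w⁻¹ (t, 0)).2

theorem phi_apply (w : W) : ∀ p : W × ZMod 2,
    phi cs w p = (w * p.1 * w⁻¹, p.2 + eta cs w⁻¹ p.1) := by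
  refine cs.simple_induction_left (p := fun w => ∀ p : W × ZMod 2,
    phi cs w p = (w * p.1 * w⁻¹, p.2 + eta cs w⁻¹ p.1)) w ?_ ?_
  · intro p; simp [eta, Function.End.one_def]
  · intro w i ih p
    have h1 : ∀ p : W × ZMod 2, phi cs (cs.simple i * w) p =
        (cs.simple i * (w * p.1 * w⁻¹) * cs.simple i,
          p.2 + eta cs w⁻¹ p.1 + if (w * p.1 * w⁻¹) = cs.simple i then 1 else 0) := by
      intro p
      rw [map_mul]
      change phi cs (cs.simple i) (phi cs w p) = _
      rw [ih, phi_simple]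
      rfl
    rw [h1]
    refine Prod.ext (by simp [mul_assoc]) ?_
    have : eta cs (cs.simple i * w)⁻¹ p.1 =
        0 + eta cs w⁻¹ p.1 + if (w * p.1 * w⁻¹) = cs.simple i then 1 else 0 := by
      rw [eta, inv_inv, h1]
    rw [this]
    simp [add_assoc]

theorem eta_mul (x y t : W) : eta cs (x * y) t = eta cs x t + eta cs y (x⁻¹ * t * x) := by
  unfold eta
  rw [mul_inv_rev, map_mul]
  change (phi cs y⁻¹ (phi cs x⁻¹ (t, 0))).2 = _
  rw [phi_apply cs x⁻¹, phi_apply cs y⁻¹, phi_apply cs y⁻¹]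
  simp

theorem eta_one (t : W) : eta cs 1 t = 0 := by simp [eta, Function.End.one_def]

theorem eta_simple (i : B) (t : W) : eta cs (cs.simple i) t = if t = cs.simple i then 1 else 0 := by
  unfold eta
  rw [cs.inv_simple, phi_simple]
  simp [act]

theorem eta_wordProd (ω : List B) : ∀ t, eta cs (cs.wordProd ω) t =
    ((cs.leftInvSeq ω).count t : ZMod 2) := by
  induction ω with
  | nil => intro t; simp [eta_one]
  | cons i ω ih =>
    intro t
    rw [cs.wordProd_cons, eta_mul, ih, eta_simple, CoxeterSystem.leftInvSeq, List.count_cons]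
    have h : cs.simple i * ((cs.simple i)⁻¹ * t * cs.simple i) * (cs.simple i)⁻¹ = t := by group
    have := List.count_map_of_injective (cs.leftInvSeq ω) (MulAut.conj (cs.simple i))
      (MulAut.conj (cs.simple i)).injective ((cs.simple i)⁻¹ * t * cs.simple i)
    rw [MulAut.conj_apply, h] at this
    rw [this]
    push_cast
    rw [add_comm]
    congr 1
    by_cases h : t = cs.simple i
    · simp [h]
    · simp [h, Ne.symm h]

theorem mem_of_eta {ω : List B} {t : W} (h : eta cs (cs.wordProd ω) t ≠ 0) :
    t ∈ cs.leftInvSeq ω := by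
  rw [eta_wordProd] at h
  by_contra hc
  rw [List.count_eq_zero_of_not_mem hc] at h
  simp at h

theorem lt_of_eta {w t : W} (h : eta cs w t ≠ 0) :
    cs.IsLeftInversion w t := by
  obtain ⟨ω, hω, rfl⟩ := cs.exists_isReduced w
  exact cs.isLeftInversion_of_mem_leftInvSeq hω (mem_of_eta cs h)

theorem eta_of_descent {w : W} {i : B} (h : cs.length (cs.simple i * w) < cs.length w) :
    eta cs w (cs.simple i) ≠ 0 := by
  intro h0
  have : eta cs (cs.simple i * w) (cs.simple i) ≠ 0 := by
    rw [eta_mul, eta_simple]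
    simp [h0]
  have := (lt_of_eta cs this).2
  simp at this
  omega

/-- Standard parabolic subgroup. -/
def par (J : Set B) : Subgroup W := Subgroup.closure (cs.simple '' J)

theorem simple_mem_par {J : Set B} {i : B} (h : i ∈ J) : cs.simple i ∈ par cs J :=
  Subgroup.subset_closure ⟨i, h, rfl⟩

theorem wordProd_mem_par {J : Set B} {ω : List B} (h : ∀ i ∈ ω, i ∈ J) :
    cs.wordProd ω ∈ par cs J := by
  induction ω with
  | nil => simp
  | cons i ω ih =>
    rw [cs.wordProd_cons]
    exact (par cs J).mul_mem (simple_mem_par cs (h i (by simp)))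
      (ih fun k hk => h k (by simp [hk]))

theorem lis_mem_par {J : Set B} {ω : List B} (h : ∀ i ∈ ω, i ∈ J) {t : W}
    (ht : t ∈ cs.leftInvSeq ω) : t ∈ par cs J := by
  induction ω generalizing t with
  | nil => simp at ht
  | cons i ω ih =>
    have hi := simple_mem_par cs (h i (by simp))
    rw [CoxeterSystem.leftInvSeq, List.mem_cons, List.mem_map] at ht
    rcases ht with rfl | ⟨x, hx, rfl⟩
    · exact hi
    · rw [MulAut.conj_apply]
      exact (par cs J).mul_mem ((par cs J).mul_mem hi (ih (fun k hk => h k (by simp [hk])) hx))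
        ((par cs J).inv_mem hi)

theorem exists_reduced_par {J : Set B} {g : W} (hg : g ∈ par cs J) :
    ∃ ω : List B, (∀ i ∈ ω, i ∈ J) ∧ cs.IsReduced ω ∧ g = cs.wordProd ω := by
  have step : ∀ i ∈ J, ∀ g, (∃ ω : List B, (∀ i ∈ ω, i ∈ J) ∧ cs.IsReduced ω ∧ g = cs.wordProd ω) →
      ∃ ω : List B, (∀ i ∈ ω, i ∈ J) ∧ cs.IsReduced ω ∧ cs.simple i * g = cs.wordProd ω := by
    rintro i hi g ⟨ω, h1, h2, rfl⟩
    rcases cs.length_simple_mul (cs.wordProd ω) i with h | h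
    · refine ⟨i :: ω, ?_, ?_, (cs.wordProd_cons _ _).symm⟩
      · simpa [hi] using h1
      · rw [CoxeterSystem.IsReduced, cs.wordProd_cons, h, h2.eq]; simp
    · have hm := mem_of_eta cs (eta_of_descent cs (w := cs.wordProd ω) (i := i) (by omega))
      obtain ⟨n, hn, he⟩ := List.getElem_of_mem hm
      have hn' : n < ω.length := by simpa using hn
      have h3 := cs.getD_leftInvSeq_mul_wordProd ω n
      rw [List.getD_eq_getElem _ _ hn, he] at h3
      refine ⟨ω.eraseIdx n, fun k hk => h1 k (List.mem_of_mem_eraseIdx hk), ?_, h3⟩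
      rw [CoxeterSystem.IsReduced, ← h3, List.length_eraseIdx_of_lt hn']
      rw [h2.eq] at h
      omega
  refine Subgroup.closure_induction_left (p := fun g _ => ∃ ω : List B, (∀ i ∈ ω, i ∈ J) ∧
    cs.IsReduced ω ∧ g = cs.wordProd ω) ?_ ?_ ?_ hg
  · exact ⟨[], by simp, by simp [CoxeterSystem.IsReduced], by simp⟩
  · rintro _ ⟨i, hi, rfl⟩ y _ h
    exact step i hi y h
  · rintro _ ⟨i, hi, rfl⟩ y _ h
    rw [cs.inv_simple]
    exact step i hi y h

theorem eta_mem_par {J : Set B} {g t : W} (hg : g ∈ par cs J) (h : eta cs g t ≠ 0) :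
    t ∈ par cs J := by
  obtain ⟨ω, h1, -, rfl⟩ := exists_reduced_par cs hg
  exact lis_mem_par cs h1 (mem_of_eta cs h)

theorem exists_descent_par {J : Set B} {g : W} (hg : g ∈ par cs J) (h : g ≠ 1) :
    ∃ i ∈ J, eta cs g (cs.simple i) ≠ 0 := by
  obtain ⟨ω, h1, h2, rfl⟩ := exists_reduced_par cs hg
  cases ω with
  | nil => simp at h
  | cons i ω =>
    refine ⟨i, h1 i (by simp), eta_of_descent cs ?_⟩
    have := h2.eq
    have h4 := cs.length_wordProd_le ω
    rw [cs.wordProd_cons, cs.simple_mul_simple_cancel_left, ← cs.wordProd_cons, this]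
    simp; omega

/-- Main lemma: rank two parabolic subgroups sharing two nontrivial involutive elements. -/
theorem key (J : Set B) (k l : B) (n : ℕ) : ∀ (z t₁ t₂ : W), cs.length z = n → t₁ ≠ t₂ → t₁ ≠ 1 →
    t₂ ≠ 1 → t₁ ∈ par cs {k, l} → t₂ ∈ par cs {k, l} → z * t₁ * z⁻¹ ∈ par cs J →
    z * t₂ * z⁻¹ ∈ par cs J → ∀ g ∈ par cs {k, l}, z * g * z⁻¹ ∈ par cs J := by
  induction n using Nat.strong_induction_on with
  | _ n ih =>
  intro z t₁ t₂ hn hne h1 h2 m1 m2 c1 c2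
  by_cases hmin : ∃ t ∈ par cs {k, l}, eta cs z⁻¹ t ≠ 0
  · obtain ⟨t, ht, he⟩ := hmin
    have hl := (lt_of_eta cs he).2
    have hti := (lt_of_eta cs he).1.inv
    have hlen : cs.length (z * t) < n := by
      rw [← cs.length_inv, mul_inv_rev, hti, ← hn, ← cs.length_inv z]; exact hl
    have hc : ∀ g ∈ par cs {k, l}, t⁻¹ * g * t ∈ par cs {k, l} := fun g hg =>
      (par cs _).mul_mem ((par cs _).mul_mem ((par cs _).inv_mem ht) hg) ht
    have hz : ∀ g, z * t * (t⁻¹ * g * t) * (z * t)⁻¹ = z * g * z⁻¹ := by intro g; group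
    intro g hg
    have := ih _ hlen (z * t) (t⁻¹ * t₁ * t) (t⁻¹ * t₂ * t) rfl (by simpa using hne)
      (fun h => h1 (by
        have : t₁ = t * (t⁻¹ * t₁ * t) * t⁻¹ := by group
        rw [this, h]; simp))
      (fun h => h2 (by
        have : t₂ = t * (t⁻¹ * t₂ * t) * t⁻¹ := by group
        rw [this, h]; simp))
      (hc _ m1) (hc _ m2) (by rw [hz]; exact c1) (by rw [hz]; exact c2) _ (hc g hg)
    rwa [hz] at this
  · push Not at hmin
    -- inversions of elements of the intersection lie in the intersection
    have hN : ∀ g ∈ par cs {k, l}, z * g * z⁻¹ ∈ par cs J → ∀ t, eta cs g t ≠ 0 →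
        z * t * z⁻¹ ∈ par cs J := by
      intro g hg hgJ t ht
      have htm := eta_mem_par cs hg ht
      refine eta_mem_par cs hgJ ?_
      have e := eta_mul cs z⁻¹ (z * g * z⁻¹ * z) t
      have e' := eta_mul cs (z * g * z⁻¹) z (z * t * z⁻¹)
      have hz0 := eta_mul cs z⁻¹ z (g⁻¹ * t * g)
      have hg' : g⁻¹ * t * g ∈ par cs {k, l} :=
        (par cs _).mul_mem ((par cs _).mul_mem ((par cs _).inv_mem hg) htm) hg
      rw [inv_mul_cancel, eta_one, hmin _ hg', zero_add] at hz0
      have a1 : z⁻¹ * (z * g * z⁻¹ * z) = g := by group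
      have a2 : z⁻¹⁻¹ * t * z⁻¹ = z * t * z⁻¹ := by group
      have a3 : (z * g * z⁻¹)⁻¹ * (z * t * z⁻¹) * (z * g * z⁻¹) =
        z⁻¹⁻¹ * (g⁻¹ * t * g) * z⁻¹ := by group
      rw [a1, a2, hmin _ htm, zero_add, e', a3, ← hz0, add_zero] at e
      rwa [← e]
    have hmulJ : ∀ x y, z * x * z⁻¹ ∈ par cs J → z * y * z⁻¹ ∈ par cs J →
        z * (x * y) * z⁻¹ ∈ par cs J := by
      intro x y hx hy
      have : z * (x * y) * z⁻¹ = (z * x * z⁻¹) * (z * y * z⁻¹) := by group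
      rw [this]; exact (par cs J).mul_mem hx hy
    -- each simple generator lies in the intersection
    have hmain : ∀ k' l', ({k, l} : Set B) = {k', l'} → z * cs.simple l' * z⁻¹ ∈ par cs J := by
      intro k' l' hset
      by_contra hnot
      have hdesc : ∀ g ∈ par cs {k, l}, z * g * z⁻¹ ∈ par cs J → g ≠ 1 →
          z * cs.simple k' * z⁻¹ ∈ par cs J := by
        intro g hg hgJ hg1
        obtain ⟨i, hi, he⟩ := exists_descent_par cs hg hg1
        have hh := hN g hg hgJ _ he
        rw [hset] at hi
        rcases hi with rfl | rfl
        · exact hh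
        · exact absurd hh hnot
      have hall : ∀ g ∈ par cs {k, l}, z * g * z⁻¹ ∈ par cs J → g ≠ 1 → g = cs.simple k' := by
        intro g hg hgJ hg1
        have hk := hdesc g hg hgJ hg1
        have hkm : cs.simple k' ∈ par cs {k, l} := simple_mem_par cs (by rw [hset]; simp)
        have red : ∀ g ∈ par cs {k, l}, z * g * z⁻¹ ∈ par cs J → g ≠ 1 →
            eta cs g (cs.simple k') ≠ 0 := by
          intro g hg hgJ hg1
          obtain ⟨i, hi, he⟩ := exists_descent_par cs hg hg1
          have hh := hN g hg hgJ _ he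
          rw [hset] at hi
          rcases hi with rfl | rfl
          · exact he
          · exact absurd hh hnot
        by_contra hgk
        have e1 := (lt_of_eta cs (red g hg hgJ hg1)).2
        have e2 := (lt_of_eta cs (red (cs.simple k' * g) ((par cs _).mul_mem hkm hg)
          (hmulJ _ _ hk hgJ) (fun h => hgk (by
            rw [← cs.simple_mul_simple_cancel_left (w := g) k', h, mul_one])))).2
        rw [cs.simple_mul_simple_cancel_left] at e2
        omega
      exact hne ((hall t₁ m1 c1 h1).trans (hall t₂ m2 c2 h2).symm)
    intro g hg
    have hle : par cs {k, l} ≤ (par cs J).comap (MulAut.conj z).toMonoidHom := by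
      rw [par, Subgroup.closure_le]
      rintro _ ⟨i, hi, rfl⟩
      rcases hi with rfl | rfl
      · exact hmain l i (Set.pair_comm _ _)
      · exact hmain k i rfl
    exact hle hg

theorem par_pair (k l : B) : par cs {k, l} = Subgroup.closure {cs.simple k, cs.simple l} := by
  rw [par, Set.image_pair]

theorem conj_mem_closure {u v x g : W} (h : g ∈ Subgroup.closure {u, v}) :
    x * g * x⁻¹ ∈ Subgroup.closure {x * u * x⁻¹, x * v * x⁻¹} := by
  have hle : Subgroup.closure {u, v} ≤
      (Subgroup.closure {x * u * x⁻¹, x * v * x⁻¹}).comap (MulAut.conj x).toMonoidHom := by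
    rw [Subgroup.closure_le]
    rintro _ (rfl | rfl)
    · exact Subgroup.subset_closure (Or.inl rfl)
    · exact Subgroup.subset_closure (Or.inr rfl)
  exact hle h

theorem conj_inv_mem_closure {u v x g : W}
    (h : g ∈ Subgroup.closure {x * u * x⁻¹, x * v * x⁻¹}) :
    x⁻¹ * g * x ∈ Subgroup.closure {u, v} := by
  have := conj_mem_closure (x := x⁻¹) h
  have e : ∀ y : W, x⁻¹ * (x * y * x⁻¹) * x⁻¹⁻¹ = y := by intro y; group
  rw [e, e, inv_inv] at this
  exact this

theorem closure_le_closure (x q : W) (k l i j : B) {t₁ t₂ : W} (hne : t₁ ≠ t₂) (h1 : t₁ ≠ 1)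
    (h2 : t₂ ≠ 1)
    (m1 : t₁ ∈ Subgroup.closure {x * cs.simple k * x⁻¹, x * cs.simple l * x⁻¹})
    (m2 : t₂ ∈ Subgroup.closure {x * cs.simple k * x⁻¹, x * cs.simple l * x⁻¹})
    (n1 : t₁ ∈ Subgroup.closure {q * cs.simple i * q⁻¹, q * cs.simple j * q⁻¹})
    (n2 : t₂ ∈ Subgroup.closure {q * cs.simple i * q⁻¹, q * cs.simple j * q⁻¹}) {g : W}
    (hg : g ∈ Subgroup.closure {x * cs.simple k * x⁻¹, x * cs.simple l * x⁻¹}) :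
    g ∈ Subgroup.closure {q * cs.simple i * q⁻¹, q * cs.simple j * q⁻¹} := by
  have hx : ∀ t : W, x⁻¹ * t * x = 1 → t = 1 := by
    intro t h
    have : t = x * (x⁻¹ * t * x) * x⁻¹ := by group
    rw [this, h]; simp
  have e : ∀ t : W, q⁻¹ * x * (x⁻¹ * t * x) * (q⁻¹ * x)⁻¹ = q⁻¹ * t * q := by intro t; group
  have := key cs {i, j} k l _ (q⁻¹ * x) (x⁻¹ * t₁ * x) (x⁻¹ * t₂ * x) rfl (by simpa using hne)
    (fun h => h1 (hx _ h)) (fun h => h2 (hx _ h))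
    (by rw [par_pair]; exact conj_inv_mem_closure m1)
    (by rw [par_pair]; exact conj_inv_mem_closure m2)
    (by rw [e, par_pair]; exact conj_inv_mem_closure n1)
    (by rw [e, par_pair]; exact conj_inv_mem_closure n2) (x⁻¹ * g * x)
    (by rw [par_pair]; exact conj_inv_mem_closure hg)
  rw [e, par_pair] at this
  have := conj_mem_closure (x := q) this
  have e2 : q * (q⁻¹ * g * q) * q⁻¹ = g := by group
  rwa [e2] at this

/-- Oddness of an element. -/
def IsOdd (t : W) : Prop := cs.lengthParity t = Multiplicative.ofAdd 1

theorem odd_conj (x : W) (k : B) : IsOdd cs (x * cs.simple k * x⁻¹) := by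
  unfold IsOdd
  rw [map_mul, map_mul, map_inv, cs.lengthParity_simple, mul_comm, inv_mul_cancel_left]

theorem not_odd_one : ¬ IsOdd cs (1 : W) := by
  unfold IsOdd
  rw [map_one]
  decide

theorem mem_closure_pair {u v g : W} (hu : u * u = 1) (hv : v * v = 1)
    (h : g ∈ Subgroup.closure {u, v}) : ∃ c : ℤ, g = (u * v) ^ c ∨ g = (u * v) ^ c * u := by
  have hui : u⁻¹ = u := inv_eq_of_mul_eq_one_left hu
  have hvi : v⁻¹ = v := inv_eq_of_mul_eq_one_left hv
  have stepu : ∀ c : ℤ, u * (u * v) ^ c = (u * v) ^ (-c) * u := by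
    intro c
    have : u * (u * v) ^ c * u⁻¹ = (u * v) ^ (-c) := by
      rw [← conj_zpow, zpow_neg, ← inv_zpow, mul_inv_rev, hui, hvi]
      congr 1
      rw [← mul_assoc, hu, one_mul]
    rw [← this]; group
  have hvu : v = u * (u * v) := by rw [← mul_assoc, hu, one_mul]
  have su : ∀ y, (∃ c : ℤ, y = (u * v) ^ c ∨ y = (u * v) ^ c * u) →
      ∃ c : ℤ, u * y = (u * v) ^ c ∨ u * y = (u * v) ^ c * u := by
    rintro y ⟨c, rfl | rfl⟩
    · exact ⟨-c, Or.inr (stepu c)⟩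
    · refine ⟨-c, Or.inl ?_⟩
      rw [← mul_assoc, stepu, mul_assoc, hu, mul_one]
  have sv : ∀ y, (∃ c : ℤ, y = (u * v) ^ c ∨ y = (u * v) ^ c * u) →
      ∃ c : ℤ, v * y = (u * v) ^ c ∨ v * y = (u * v) ^ c * u := by
    rintro y ⟨c, hy⟩
    have : v * y = u * ((u * v) * y) := by rw [mul_assoc, ← mul_assoc, hu, one_mul]
    rw [this]
    refine su _ ⟨1 + c, ?_⟩
    rcases hy with rfl | rfl
    · left; rw [zpow_one_add]
    · right; rw [zpow_one_add]; simp only [mul_assoc]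
  refine Subgroup.closure_induction_left
    (p := fun g _ => ∃ c : ℤ, g = (u * v) ^ c ∨ g = (u * v) ^ c * u) ⟨0, Or.inl (by simp)⟩ ?_ ?_ h
  · rintro _ (rfl | rfl) y _ hy
    · exact su y hy
    · exact sv y hy
  · rintro _ (rfl | rfl) y _ hy
    · rw [hui]; exact su y hy
    · rw [hvi]; exact sv y hy

theorem mem_rhoWord_iff {u v : W} (hu : u * u = 1) (hv : v * v = 1) (ou : IsOdd cs u)
    (ov : IsOdd cs v) (hn : 0 < orderOf (u * v)) (g : W) :
    g ∈ rhoWord u v (orderOf (u * v)) ↔ IsOdd cs g ∧ g ∈ Subgroup.closure {u, v} := by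
  have hp : cs.lengthParity (u * v) = 1 := by
    rw [map_mul, ou, ov]; decide
  have mu : u ∈ Subgroup.closure {u, v} := Subgroup.subset_closure (Or.inl rfl)
  have mv : v ∈ Subgroup.closure {u, v} := Subgroup.subset_closure (Or.inr rfl)
  constructor
  · intro h
    obtain ⟨c, -, rfl⟩ := List.mem_map.1 h
    refine ⟨?_, Subgroup.mul_mem _ (Subgroup.pow_mem _ (Subgroup.mul_mem _ mu mv) _) mu⟩
    unfold IsOdd
    rw [map_mul, map_pow, hp, one_pow, one_mul, ou]
  · rintro ⟨ho, hm⟩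
    obtain ⟨c, rfl | rfl⟩ := mem_closure_pair hu hv hm
    · exfalso
      unfold IsOdd at ho
      rw [map_zpow, hp, one_zpow] at ho
      revert ho; decide
    · have hpos : (0 : ℤ) < orderOf (u * v) := by exact_mod_cast hn
      refine List.mem_map.2 ⟨(c % (orderOf (u * v) : ℤ)).toNat, ?_, ?_⟩
      · rw [List.mem_range]
        have := Int.emod_lt_of_pos c hpos
        have := Int.emod_nonneg c hpos.ne'
        omega
      · congr 1
        rw [← zpow_natCast, Int.toNat_of_nonneg (Int.emod_nonneg c hpos.ne'), zpow_mod_orderOf]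

theorem rhoWord_nodup (u v : W) : (rhoWord u v (orderOf (u * v))).Nodup := by
  refine List.Nodup.map_on ?_ List.nodup_range
  intro a ha b hb h
  rw [List.mem_range] at ha hb
  exact pow_injOn_Iio_orderOf ha hb (mul_right_cancel h)

theorem rhoWord_length (u v : W) (m : ℕ) : (rhoWord u v m).length = m := by simp [rhoWord]

theorem rhoWord_conj (q s t : W) (m : ℕ) : (rhoWord s t m).map (fun x => q * x * q⁻¹) =
    rhoWord (q * s * q⁻¹) (q * t * q⁻¹) m := by
  simp only [rhoWord, List.map_map]
  refine List.map_congr_left fun c _ => ?_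
  have : q * s * q⁻¹ * (q * t * q⁻¹) = q * (s * t) * q⁻¹ := by group
  simp only [Function.comp, this, conj_pow]
  group

theorem rhoWord_reverse {s t : W} {m : ℕ} (hs : s * s = 1) (ht : t * t = 1)
    (h : (s * t) ^ m = 1) : (rhoWord s t m).reverse = rhoWord t s m := by
  have hsi : s⁻¹ = s := inv_eq_of_mul_eq_one_left hs
  have hti : t⁻¹ = t := inv_eq_of_mul_eq_one_left ht
  refine List.ext_getElem (by simp [rhoWord]) ?_
  intro c h1 h2
  simp only [rhoWord_length] at h2
  simp only [List.getElem_reverse, rhoWord, List.getElem_map, List.getElem_range, List.length_map,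
    List.length_range]
  have h3 : t * s = (s * t)⁻¹ := by rw [mul_inv_rev, hsi, hti]
  rw [h3]
  have h4 : (s * t) ^ (m - 1 - c) * (s * t) ^ (c + 1) = 1 := by
    rw [← pow_add, show m - 1 - c + (c + 1) = m by omega, h]
  rw [eq_inv_of_mul_eq_one_left h4, inv_pow, pow_succ', mul_inv_rev, mul_inv_rev, hsi, hti,
    mul_assoc, mul_assoc, hs, mul_one]

theorem rhoWord_inj {u v s t : W} {n m : ℕ} (hm : 2 ≤ m) (h : rhoWord u v n = rhoWord s t m) :
    u = s ∧ v = t := by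
  have hnm : n = m := by simpa [rhoWord] using congrArg List.length h
  subst hnm
  have h0 := congrArg (fun L => L[0]?) h
  have h1 := congrArg (fun L => L[1]?) h
  simp [rhoWord, show 0 < n by omega, show 1 < n by omega] at h0 h1
  subst h0
  exact ⟨rfl, by simpa using h1⟩

theorem sublist_middle {E X D Y : List W} (hE : E.Nodup)
    (hs : ∀ x ∈ E, ∀ y ∈ E, x ∈ D → y ∈ D → x = y)
    (h : List.Sublist E (X ++ D ++ Y)) : List.Sublist E (X ++ D.reverse ++ Y) := by
  obtain ⟨E12, E3, rfl, h12, h3⟩ := List.sublist_append_iff.1 h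
  obtain ⟨E1, E2, rfl, h1, h2⟩ := List.sublist_append_iff.1 h12
  refine (h1.append ?_).append h3
  match E2, h2, hE, hs with
  | [], _, _, _ => simp
  | [x], h2, _, _ =>
    rw [List.singleton_sublist] at h2 ⊢
    simpa using h2
  | x :: y :: L, h2, hE, hs =>
    exfalso
    have hxy := hs x (by simp) y (by simp) (h2.subset (by simp)) (h2.subset (by simp))
    subst hxy
    have hnd : (x :: x :: L).Nodup := (hE.of_append_left).of_append_right
    simp at hnd

theorem sublist_iff_eq {E X D Y : List W} (hL : (X ++ D ++ Y).Nodup)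
    (hE : E.Nodup) (hs : ∀ x, x ∈ E ↔ x ∈ D) :
    List.Sublist E (X ++ D ++ Y) ↔ E = D := by
  constructor
  · intro h
    have hD : D.Nodup := (hL.of_append_left).of_append_right
    have hlen : E.length = D.length := ((List.perm_ext_iff_of_nodup hE hD).2 hs).length_eq
    have h' := h.filter (fun x => decide (x ∈ D))
    have e1 : E.filter (fun x => decide (x ∈ D)) = E := by
      rw [List.filter_eq_self]; intro x hx; simpa using (hs x).1 hx
    have e2 : D.filter (fun x => decide (x ∈ D)) = D := by
      rw [List.filter_eq_self]; intro x hx; simpa using hx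
    have hdXY := List.nodup_append.1 hL
    have hdX := List.nodup_append.1 hdXY.1
    have e3 : X.filter (fun x => decide (x ∈ D)) = [] := by
      rw [List.filter_eq_nil_iff]; intro x hx hc
      exact hdX.2.2 x hx x (by simpa using hc) rfl
    have e4 : Y.filter (fun x => decide (x ∈ D)) = [] := by
      rw [List.filter_eq_nil_iff]; intro x hx hc
      exact hdXY.2.2 x (List.mem_append_right _ (by simpa using hc)) x hx rfl
    rw [List.filter_append, List.filter_append, e1, e2, e3, e4, List.nil_append,
      List.append_nil] at h'
    exact h'.eq_of_length hlen
  · rintro rfl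
    exact ((List.sublist_append_right X E).trans (List.sublist_append_left _ Y))

end BraidHas

/-- If the reduced expression `b` of `w` is obtained from `a` by an
`(s,t)`-braid move, and `q ∈ W` is such that `Invs b` is obtained from `Invs a` by
replacing a factor equal to `q ρ_{s,t} q⁻¹` by its reversal, then, with `s' = qsq⁻¹`,
`t' = qtq⁻¹`, one has `Has b = Has a − (s',t') + (t',s')` in `ℤ[𝔑]`. -/
theorem has_of_braid_move {B W : Type*} [Group W] {M : CoxeterMatrix B}
    (cs : CoxeterSystem M W) (w : W) (i j : B) (hij : i ≠ j) (hfin : M.M i j ≠ 0)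
    (a b : List B)
    (ha : cs.IsReduced a) (haw : cs.wordProd a = w)
    (hb : cs.IsReduced b) (hbw : cs.wordProd b = w)
    (hmove : IsBraidMove cs i j a b)
    (q : W)
    (hrepl : ∃ X Y : List W,
      cs.leftInvSeq a = X ++ (rhoWord (cs.simple i) (cs.simple j) (M.M i j)).map
        (fun x => q * x * q⁻¹) ++ Y ∧
      cs.leftInvSeq b = X ++ ((rhoWord (cs.simple i) (cs.simple j) (M.M i j)).map
        (fun x => q * x * q⁻¹)).reverse ++ Y) :
    ∀ p ∈ NSet cs,
      HasFn cs b p = HasFn cs a p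
        - (if p = (q * cs.simple i * q⁻¹, q * cs.simple j * q⁻¹) then 1 else 0)
        + (if p = (q * cs.simple j * q⁻¹, q * cs.simple i * q⁻¹) then 1 else 0) := by

  rintro ⟨u, v⟩ ⟨x, k, l, hkl, hMkl, hu, hv⟩
  obtain ⟨X, Y, hXa, hXb⟩ := hrepl
  dsimp only at hu hv
  rw [BraidHas.rhoWord_conj] at hXa hXb
  have hXan : (X ++ rhoWord (q * cs.simple i * q⁻¹) (q * cs.simple j * q⁻¹) (M.M i j) ++ Y).Nodup :=
    hXa ▸ ha.nodup_leftInvSeq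
  have hXbn : (X ++ (rhoWord (q * cs.simple i * q⁻¹) (q * cs.simple j * q⁻¹) (M.M i j)).reverse ++
    Y).Nodup := hXb ▸ hb.nodup_leftInvSeq
  have sq : ∀ (y : W) (r : B), (y * cs.simple r * y⁻¹) * (y * cs.simple r * y⁻¹) = 1 := by
    intro y r
    simp [mul_assoc]
  have pw : ∀ (y : W) (r r' : B),
      ((y * cs.simple r * y⁻¹) * (y * cs.simple r' * y⁻¹)) ^ (M.M r r') = 1 := by
    intro y r r'
    have : y * cs.simple r * y⁻¹ * (y * cs.simple r' * y⁻¹) =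
      y * (cs.simple r * cs.simple r') * y⁻¹ := by group
    have h2 := cs.simple_mul_simple_pow r r'
    rw [this, conj_pow, h2]
    simp
  have hm2 : 2 ≤ M.M i j := by
    have : M.M i j ≠ 1 := M.off_diagonal i j hij
    omega
  have hos := BraidHas.odd_conj cs q i
  have hot := BraidHas.odd_conj cs q j
  have hou := BraidHas.odd_conj cs x k
  have hov := BraidHas.odd_conj cs x l
  have hs2 := sq q i
  have ht2 := sq q j
  have hu2 := sq x k
  have hv2 := sq x l
  have hst := pw q i j
  have huv := pw x k l
  have hle1 := fun (t₁ t₂ : W) (h : t₁ ≠ t₂) (h1 : t₁ ≠ 1) (h2 : t₂ ≠ 1) m1 m2 n1 n2 (g : W) hg =>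
    BraidHas.closure_le_closure cs x q k l i j h h1 h2 m1 m2 n1 n2 (g := g) hg
  have hle2 := fun (t₁ t₂ : W) (h : t₁ ≠ t₂) (h1 : t₁ ≠ 1) (h2 : t₂ ≠ 1) m1 m2 n1 n2 (g : W) hg =>
    BraidHas.closure_le_closure cs q x i j k l h h1 h2 m1 m2 n1 n2 (g := g) hg
  rw [← hu] at hou hu2
  rw [← hv] at hov hv2
  rw [← hu, ← hv] at huv hle1 hle2
  generalize q * cs.simple i * q⁻¹ = s at *
  generalize q * cs.simple j * q⁻¹ = t at *
  -- the order of `s * t`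
  have hord : orderOf (s * t) = M.M i j := by
    have hdvd := orderOf_dvd_of_pow_eq_one hst
    have hpos : 0 < orderOf (s * t) := Nat.pos_of_dvd_of_pos hdvd (by omega)
    by_contra hne
    have hlt : orderOf (s * t) < M.M i j := lt_of_le_of_ne (Nat.le_of_dvd (by omega) hdvd) hne
    have hD : (rhoWord s t (M.M i j)).Nodup := (hXan.of_append_left).of_append_right
    have := (List.nodup_iff_injective_get.1 hD)
      (a₁ := ⟨0, by rw [BraidHas.rhoWord_length]; omega⟩)
      (a₂ := ⟨orderOf (s * t), by rw [BraidHas.rhoWord_length]; omega⟩)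
      (by simp [rhoWord, pow_orderOf_eq_one])
    simp at this
    omega
  have hn : 0 < orderOf (u * v) :=
    Nat.pos_of_dvd_of_pos (orderOf_dvd_of_pow_eq_one huv) (Nat.pos_of_ne_zero hMkl)
  have hrev := BraidHas.rhoWord_reverse hs2 ht2 hst
  have memE := BraidHas.mem_rhoWord_iff cs hu2 hv2 hou hov hn
  have memD := BraidHas.mem_rhoWord_iff cs hs2 ht2 hos hot (by omega)
  have hEn := BraidHas.rhoWord_nodup u v
  have hDn := BraidHas.rhoWord_nodup s t
  rw [hord] at memD hDn
  have hone : ∀ g, BraidHas.IsOdd cs g → g ≠ 1 := by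
    rintro g hg rfl
    exact BraidHas.not_odd_one cs hg
  unfold HasFn
  dsimp only
  rw [hXa, hXb]
  by_cases hsh : ∃ t₁ t₂, t₁ ≠ t₂ ∧ t₁ ∈ rhoWord u v (orderOf (u * v)) ∧
      t₂ ∈ rhoWord u v (orderOf (u * v)) ∧ t₁ ∈ rhoWord s t (M.M i j) ∧ t₂ ∈ rhoWord s t (M.M i j)
  · obtain ⟨t₁, t₂, hne, e1, e2, d1, d2⟩ := hsh
    rw [memE] at e1 e2
    rw [memD] at d1 d2
    have hset : ∀ g, g ∈ rhoWord u v (orderOf (u * v)) ↔ g ∈ rhoWord s t (M.M i j) := by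
      intro g
      rw [memE, memD]
      refine and_congr_right fun _ => ⟨?_, ?_⟩
      · exact hle1 t₁ t₂ hne (hone _ e1.1) (hone _ e2.1) e1.2 e2.2 d1.2 d2.2 g
      · exact hle2 t₁ t₂ hne (hone _ e1.1) (hone _ e2.1) d1.2 d2.2 e1.2 e2.2 g
    have ia := BraidHas.sublist_iff_eq hXan hEn hset
    have ib := BraidHas.sublist_iff_eq hXbn hEn (fun g => by rw [hset, List.mem_reverse])
    have ja : rhoWord u v (orderOf (u * v)) = rhoWord s t (M.M i j) ↔ (u, v) = (s, t) := by
      constructor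
      · intro h
        obtain ⟨rfl, rfl⟩ := BraidHas.rhoWord_inj hm2 h
        rfl
      · intro h
        obtain ⟨rfl, rfl⟩ := Prod.mk.inj h
        rw [hord]
    have jb : rhoWord u v (orderOf (u * v)) = (rhoWord s t (M.M i j)).reverse ↔
        (u, v) = (t, s) := by
      rw [hrev]
      constructor
      · intro h
        obtain ⟨rfl, rfl⟩ := BraidHas.rhoWord_inj hm2 h
        rfl
      · intro h
        obtain ⟨h1, h2⟩ := Prod.mk.inj h
        have hlen := ((List.perm_ext_iff_of_nodup hEn hDn).2 hset).length_eq
        rw [BraidHas.rhoWord_length, BraidHas.rhoWord_length] at hlen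
        rw [hlen, h1, h2]
    rw [ja] at ia
    rw [jb] at ib
    simp only [ia, ib]
    ring
  · push Not at hsh
    have hs' : ∀ a ∈ rhoWord u v (orderOf (u * v)), ∀ b ∈ rhoWord u v (orderOf (u * v)),
        a ∈ rhoWord s t (M.M i j) → b ∈ rhoWord s t (M.M i j) → a = b := by
      intro a ha b hb ha' hb'
      by_contra hne
      exact hsh a b hne ha hb ha' hb'
    have hiff : List.Sublist (rhoWord u v (orderOf (u * v)))
          (X ++ (rhoWord s t (M.M i j)).reverse ++ Y) ↔
        List.Sublist (rhoWord u v (orderOf (u * v))) (X ++ rhoWord s t (M.M i j) ++ Y) := by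
      constructor
      · intro h
        have := BraidHas.sublist_middle hEn (fun a ha b hb ha' hb' =>
          hs' a ha b hb (by simpa using ha') (by simpa using hb')) h
        rwa [List.reverse_reverse] at this
      · exact BraidHas.sublist_middle hEn hs'
    have hnot : ¬ (∀ g, g ∈ rhoWord s t (M.M i j) → g ∈ rhoWord u v (orderOf (u * v))) := by
      intro hall
      have l0 : 0 < (rhoWord s t (M.M i j)).length := by rw [BraidHas.rhoWord_length]; omega
      have l1 : 1 < (rhoWord s t (M.M i j)).length := by rw [BraidHas.rhoWord_length]; omega
      have := hs' _ (hall _ (List.getElem_mem l0)) _ (hall _ (List.getElem_mem l1))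
        (List.getElem_mem l0) (List.getElem_mem l1)
      rw [hDn.getElem_inj_iff] at this
      omega
    have n1 : (u, v) ≠ (s, t) := by
      intro h
      obtain ⟨rfl, rfl⟩ := Prod.mk.inj h
      exact hnot (fun g hg => by rwa [hord])
    have n2 : (u, v) ≠ (t, s) := by
      intro h
      obtain ⟨h1, h2⟩ := Prod.mk.inj h
      refine hnot (fun g hg => ?_)
      rw [memE, h1, h2, Set.pair_comm]
      exact (memD g).1 hg
    simp only [hiff, if_neg n1, if_neg n2]
    ring
end

section
/- Let (W,S) be a Coxeter group and w ∈ W. Consider the directed graph R(w) whose vertices are the reduced expressions for w, with an arc colored [(s,t)] from →a to →b whenever →b is obtained from →a by an (s,t)-braid move, where [(s,t)] is the equivalence class of (s,t) under simultaneous conjugation. Let C be a directed cycle in R(w) and let c = [(s,t)] be a color, with opposite color c^op = [(t,s)]. Then the number of arcs of C colored c equals the number of arcs of C colored c^op. -/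
open scoped Classical

/-- Simultaneous conjugacy of pairs of simple reflections: `(s_i, s_j) ∼ (s_{i'}, s_{j'})`
iff some `q ∈ W` conjugates `s_i` to `s_{i'}` and `s_j` to `s_{j'}`. The arc of a braid
move `(s_i, s_j)` is colored by the `∼`-class of `(s_i, s_j)`. -/
def SimConj {B W : Type*} [Group W] {M : CoxeterMatrix B}
    (cs : CoxeterSystem M W) (p p' : B × B) : Prop :=
  ∃ q : W, q * cs.simple p.1 * q⁻¹ = cs.simple p'.1 ∧
    q * cs.simple p.2 * q⁻¹ = cs.simple p'.2

namespace CCB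

/-- The list `x, xyx, xyxyx, …` with `n` entries. -/
def rho {W : Type*} [Group W] (x y : W) (n : ℕ) : List W :=
  (List.range n).map (fun k => (x * y) ^ k * x)

/-- The full dihedral list of `(x, y)` is a subsequence of `L`. -/
def Good {W : Type*} [Group W] (L : List W) (p : W × W) : Prop :=
  p.1 * p.1 = 1 ∧ p.2 * p.2 = 1 ∧ 0 < orderOf (p.1 * p.2) ∧
    (rho p.1 p.2 (orderOf (p.1 * p.2))).Sublist L

/-- Maximal good pairs. -/
def Mx {W : Type*} [Group W] (L : List W) (p : W × W) : Prop :=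
  Good L p ∧ ∀ p' : W × W, Good L p' →
    rho p.1 p.2 (orderOf (p.1 * p.2)) ⊆ rho p'.1 p'.2 (orderOf (p'.1 * p'.2)) → p' = p

variable {W : Type*} [Group W]

theorem length_rho (x y : W) (n : ℕ) : (rho x y n).length = n := by simp [rho]

theorem mem_rho {x y z : W} {n : ℕ} : z ∈ rho x y n ↔ ∃ k < n, (x * y) ^ k * x = z := by
  simp [rho]

theorem mem_rho_zpow {x y : W} {n : ℕ} (hn : 0 < n) (h : (x * y) ^ n = 1) (k : ℤ) :
    (x * y) ^ k * x ∈ rho x y n := by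
  rw [mem_rho]
  have hn' : (n : ℤ) ≠ 0 := by exact_mod_cast hn.ne'
  have h0 := Int.emod_nonneg k hn'
  have h1 := Int.emod_lt_of_pos k (b := (n : ℤ)) (by exact_mod_cast hn)
  refine ⟨(k % n).toNat, by omega, ?_⟩
  congr 1
  rw [← zpow_natCast, Int.toNat_of_nonneg h0]
  conv_rhs => rw [← Int.emod_add_mul_ediv k n, zpow_add, zpow_mul, zpow_natCast _ n, h]
  simp

theorem conj_zpow {x y : W} (hx : x * x = 1) (hy : y * y = 1) (k : ℤ) :
    x * (x * y) ^ k * x = (x * y) ^ (-k) := by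
  have hx' : x⁻¹ = x := inv_eq_of_mul_eq_one_left hx
  have hy' : y⁻¹ = y := inv_eq_of_mul_eq_one_left hy
  have : x * (x * y) ^ k * x = (x * (x * y) * x⁻¹) ^ k := by rw [_root_.conj_zpow, hx']
  rw [this, zpow_neg, ← inv_zpow]
  congr 1
  rw [hx', mul_inv_rev, hx', hy', ← mul_assoc x x y, hx, one_mul]

theorem refl_mul {x y : W} (hx : x * x = 1) (hy : y * y = 1) (a b : ℤ) :
    ((x * y) ^ a * x) * ((x * y) ^ b * x) = (x * y) ^ (a - b) := by
  have := conj_zpow hx hy b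
  rw [sub_eq_add_neg, zpow_add, ← this]; group

theorem rho_reverse {x y : W} (hx : x * x = 1) (hy : y * y = 1) {n : ℕ}
    (h : (x * y) ^ n = 1) : rho y x n = (rho x y n).reverse := by
  have hx' : x⁻¹ = x := inv_eq_of_mul_eq_one_left hx
  have hy' : y⁻¹ = y := inv_eq_of_mul_eq_one_left hy
  apply List.ext_getElem
  · simp [rho]
  · intro k h1 h2
    have hk : k < n := by simpa [rho] using h1
    simp only [rho, List.getElem_map, List.getElem_range, List.getElem_reverse, List.length_map,
      List.length_range]
    have e : y * x = (x * y)⁻¹ := by rw [mul_inv_rev, hx', hy']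
    have e2 : y = (x * y)⁻¹ * x := by rw [mul_inv_rev, hx', hy', mul_assoc, hx, mul_one]
    conv_lhs => rw [e]; rhs; rw [e2]
    rw [← mul_assoc]
    congr 1
    rw [← pow_succ, inv_pow, inv_eq_iff_mul_eq_one, ← pow_add, ← h]
    congr 1
    omega

/-- consecutive entries -/
theorem rho_split {x y r r' : W} {n : ℕ} {A C : List W} (hx : x * x = 1) (hy : y * y = 1)
    (h : rho x y n = A ++ r :: r' :: C) :
    r' * r = x * y ∧ x = (x * y) ^ (-(A.length : ℤ)) * r := by
  have hl := congrArg List.length h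
  rw [length_rho] at hl
  simp at hl
  have e1 : (rho x y n)[A.length]? = some r := by rw [h]; simp
  have e2 : (rho x y n)[A.length + 1]? = some r' := by
    rw [h, List.getElem?_append_right (by omega)]; simp
  simp only [rho, List.getElem?_map] at e1 e2
  rw [List.getElem?_range (by omega)] at e1 e2
  simp only [Option.map_some, Option.some.injEq] at e1 e2
  constructor
  · have := refl_mul hx hy ((A.length + 1 : ℕ) : ℤ) (A.length : ℤ)
    rw [zpow_natCast, zpow_natCast, e1, e2] at this
    rw [this]; simp
  · rw [← e1]; simp

theorem head_mem {x y : W} (hn : 0 < orderOf (x * y)) :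
    x ∈ rho x y (orderOf (x * y)) := mem_rho.2 ⟨0, hn, by simp⟩

theorem last_mem {x y : W} (hy : y * y = 1) (hn : 0 < orderOf (x * y)) :
    y ∈ rho x y (orderOf (x * y)) := by
  have := mem_rho_zpow hn (pow_orderOf_eq_one (x * y)) (-1)
  have e : (x * y) ^ (-1 : ℤ) * x = y := by
    rw [zpow_neg_one, mul_inv_rev, mul_assoc, inv_mul_cancel, mul_one]
    exact inv_eq_of_mul_eq_one_left hy
  rwa [e] at this

theorem finite_Mx (L : List W) : {p : W × W | Mx L p}.Finite := by
  apply Set.Finite.subset (Finset.finite_toSet (L.toFinset ×ˢ L.toFinset))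
  rintro ⟨x, y⟩ ⟨⟨hx, hy, hn, hs⟩, -⟩
  simp only [Finset.coe_product, Set.mem_prod, Finset.mem_coe, List.mem_toFinset]
  exact ⟨hs.subset (head_mem hn), hs.subset (last_mem hy hn)⟩

theorem orderOf_eq_of_nodup {u v : W} {m : ℕ} (hm : 0 < m) (h : (u * v) ^ m = 1)
    (hnd : (rho u v m).Nodup) : orderOf (u * v) = m := by
  have hle : orderOf (u * v) ≤ m := orderOf_le_of_pow_eq_one hm h
  have hpos : 0 < orderOf (u * v) := orderOf_pos_iff.2 (isOfFinOrder_iff_pow_eq_one.2 ⟨m, hm, h⟩)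
  by_contra hne
  have hlt : orderOf (u * v) < m := lt_of_le_of_ne hle hne
  have h1 : (rho u v m)[orderOf (u * v)]'(by rw [length_rho]; exact hlt) =
      (rho u v m)[0]'(by rw [length_rho]; exact hm) := by
    simp [rho, pow_orderOf_eq_one]
  have := (hnd.getElem_inj_iff).1 h1
  omega

/-- Reversing a block preserves good pairs not inside the block. -/
theorem good_move {u v : W} (hu : u * u = 1) (hv : v * v = 1) {m : ℕ} (hm : 0 < m)
    (h : (u * v) ^ m = 1) (P S : List W) {p : W × W}
    (hp : Good (P ++ rho u v m ++ S) p) :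
    Good (P ++ rho v u m ++ S) p ∨ rho p.1 p.2 (orderOf (p.1 * p.2)) ⊆ rho u v m := by
  obtain ⟨x, y⟩ := p
  obtain ⟨hx, hy, hn, hs⟩ := hp
  dsimp only at *
  obtain ⟨R12, R3, e, h12, h3⟩ := List.sublist_append_iff.1 hs
  obtain ⟨R1, R2, rfl, h1, h2⟩ := List.sublist_append_iff.1 h12
  rcases R2 with _ | ⟨r, _ | ⟨r', C⟩⟩
  · left
    refine ⟨hx, hy, hn, ?_⟩
    dsimp only
    rw [e]
    exact (h1.append (List.nil_sublist _)).append h3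
  · left
    refine ⟨hx, hy, hn, ?_⟩
    dsimp only
    rw [e]
    refine (h1.append ?_).append h3
    rw [List.singleton_sublist] at h2 ⊢
    rw [rho_reverse hu hv h]
    simpa using h2
  · right
    have e' : rho x y (orderOf (x * y)) = R1 ++ r :: r' :: (C ++ R3) := by simp [e]
    obtain ⟨hxy, hx0⟩ := rho_split hx hy e'
    obtain ⟨a, -, ha⟩ := mem_rho.1 (h2.subset (show r ∈ r :: r' :: C by simp))
    obtain ⟨b, -, hb⟩ := mem_rho.1 (h2.subset (show r' ∈ r :: r' :: C by simp))
    have key : x * y = (u * v) ^ ((b : ℤ) - a) := by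
      rw [← refl_mul hu hv, zpow_natCast, zpow_natCast, ha, hb, hxy]
    intro z hz
    obtain ⟨k, -, rfl⟩ := mem_rho.1 hz
    have : (x * y) ^ k * x =
        (u * v) ^ (((b : ℤ) - a) * k + ((b : ℤ) - a) * (-(R1.length : ℤ)) + a) * u := by
      rw [zpow_add, zpow_add, zpow_mul, zpow_mul, ← key, zpow_natCast, zpow_natCast, mul_assoc _ _ u,
        ha, mul_assoc, ← hx0]
    rw [this]
    exact mem_rho_zpow hm h _

theorem mx_block {u v : W} (hu : u * u = 1) (hv : v * v = 1) {m : ℕ} (hm : 2 ≤ m)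
    (h : (u * v) ^ m = 1) (P S : List W) (hnd : (P ++ rho u v m ++ S).Nodup) :
    Mx (P ++ rho u v m ++ S) (u, v) := by
  have hndU : (rho u v m).Nodup := (List.nodup_append.1 (List.nodup_append.1 hnd).1).2.1
  have ho : orderOf (u * v) = m := orderOf_eq_of_nodup (by omega) h hndU
  refine ⟨⟨hu, hv, by dsimp only; omega, ?_⟩, ?_⟩
  · dsimp only
    rw [ho]
    exact (List.sublist_append_right _ _).trans (List.sublist_append_left _ _)
  rintro ⟨x, y⟩ ⟨hx, hy, hn, hs⟩ hsub
  dsimp only at *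
  rw [ho] at hsub
  obtain ⟨R12, R3, e, h12, h3⟩ := List.sublist_append_iff.1 hs
  obtain ⟨R1, R2, rfl, h1, h2⟩ := List.sublist_append_iff.1 h12
  have hUR : rho u v m ⊆ R2 := by
    intro z hz
    have hz' := hsub hz
    rw [e] at hz'
    simp only [List.mem_append] at hz'
    rcases hz' with (hz' | hz') | hz'
    · exact absurd rfl ((List.nodup_append.1 (List.nodup_append.1 hnd).1).2.2 z (h1.subset hz') z hz)
    · exact hz'
    · exact absurd rfl ((List.nodup_append.1 hnd).2.2 z (List.mem_append_right _ hz) z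
        (h3.subset hz'))
  have hEq : R2 = rho u v m :=
    h2.eq_of_length_le (hndU.subperm hUR).length_le
  subst hEq
  obtain ⟨m', rfl⟩ : ∃ m', m = m' + 2 := ⟨m - 2, by omega⟩
  have hcons : ∃ C, rho u v (m' + 2) = u :: (u * v * u) :: C := by
    refine ⟨(List.range m').map (fun k => (u * v) ^ (k + 1 + 1) * u), ?_⟩
    simp [rho, List.range_succ_eq_map]
  obtain ⟨C, hC⟩ := hcons
  have e' : rho x y (orderOf (x * y)) = R1 ++ u :: (u * v * u) :: (C ++ R3) := by
    rw [e, hC]; simp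
  obtain ⟨hxy, hx0⟩ := rho_split hx hy e'
  have hxy' : u * v = x * y := by rw [← hxy, mul_assoc, hu, mul_one]
  have hl := congrArg List.length e
  rw [List.length_append, List.length_append, length_rho, length_rho, ← hxy', ho] at hl
  have hR1 : R1.length = 0 := by omega
  rw [hR1] at hx0
  have hxu : x = u := by simpa using hx0
  subst hxu
  rw [mul_left_cancel hxy']

theorem mx_move {u v : W} (hu : u * u = 1) (hv : v * v = 1) {m : ℕ} (hm : 2 ≤ m)
    (h : (u * v) ^ m = 1) (P S : List W) (hnd : (P ++ rho u v m ++ S).Nodup)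
    {p : W × W} (hne : p ≠ (u, v)) (hp : Mx (P ++ rho u v m ++ S) p) :
    Mx (P ++ rho v u m ++ S) p := by
  have hndU : (rho u v m).Nodup := (List.nodup_append.1 (List.nodup_append.1 hnd).1).2.1
  have ho : orderOf (u * v) = m := orderOf_eq_of_nodup (by omega) h hndU
  have hnot : ¬ rho p.1 p.2 (orderOf (p.1 * p.2)) ⊆ rho u v m := by
    intro hsub
    refine hne (hp.2 (u, v) (mx_block hu hv hm h P S hnd).1 ?_).symm
    dsimp only
    rwa [ho]
  have h' : (v * u) ^ m = 1 := by
    have : v * u = (u * v)⁻¹ := by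
      rw [mul_inv_rev, inv_eq_of_mul_eq_one_left hu, inv_eq_of_mul_eq_one_left hv]
    rw [this, inv_pow, h, inv_one]
  refine ⟨(good_move hu hv (by omega) h P S hp.1).resolve_right hnot, ?_⟩
  intro p' hp' hsub
  rcases good_move hv hu (by omega) h' P S hp' with h1 | h1
  · exact hp.2 p' h1 hsub
  · refine absurd ?_ hnot
    intro z hz
    have := h1 (hsub hz)
    rw [rho_reverse hu hv h] at this
    simpa using this

theorem not_good_op {u v : W} (hu : u * u = 1) (hv : v * v = 1) {m : ℕ} (hm : 2 ≤ m)
    (h : (u * v) ^ m = 1) (P S : List W) (hnd : (P ++ rho u v m ++ S).Nodup) :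
    ¬ Mx (P ++ rho u v m ++ S) (v, u) := by
  intro hM
  have hndU : (rho u v m).Nodup := (List.nodup_append.1 (List.nodup_append.1 hnd).1).2.1
  have ho : orderOf (u * v) = m := orderOf_eq_of_nodup (by omega) h hndU
  have hi : v * u = (u * v)⁻¹ := by
    rw [mul_inv_rev, inv_eq_of_mul_eq_one_left hu, inv_eq_of_mul_eq_one_left hv]
  have := hM.2 (u, v) (mx_block hu hv hm h P S hnd).1 (by
    dsimp only
    rw [hi, orderOf_inv, ho, rho_reverse hu hv h]
    exact fun z hz => List.mem_reverse.1 hz)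
  have huv : u = v := congrArg Prod.fst this
  subst huv
  rw [hu, orderOf_one] at ho
  omega

theorem nodup_op {u v : W} (hu : u * u = 1) (hv : v * v = 1) {m : ℕ}
    (h : (u * v) ^ m = 1) (P S : List W) (hnd : (P ++ rho u v m ++ S).Nodup) :
    (P ++ rho v u m ++ S).Nodup := by
  rw [rho_reverse hu hv h]
  refine List.Perm.nodup ?_ hnd
  exact ((List.reverse_perm _).symm.append_left P).append_right S

/-- The counting step. -/
theorem count_step {u v : W} (hu : u * u = 1) (hv : v * v = 1) {m : ℕ} (hm : 2 ≤ m)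
    (h : (u * v) ^ m = 1) (P S : List W) (hnd : (P ++ rho u v m ++ S).Nodup)
    (N : W × W → Prop) :
    {p | Mx (P ++ rho v u m ++ S) p ∧ N p}.ncard + (if N (u, v) then 1 else 0) =
    {p | Mx (P ++ rho u v m ++ S) p ∧ N p}.ncard + (if N (v, u) then 1 else 0) := by
  have h' : (v * u) ^ m = 1 := by
    have : v * u = (u * v)⁻¹ := by
      rw [mul_inv_rev, inv_eq_of_mul_eq_one_left hu, inv_eq_of_mul_eq_one_left hv]
    rw [this, inv_pow, h, inv_one]
  have hnd' := nodup_op hu hv h P S hnd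
  have m1 := mx_block hu hv hm h P S hnd
  have m2 := mx_block hv hu hm h' P S hnd'
  have n1 := not_good_op hu hv hm h P S hnd
  have n2 := not_good_op hv hu hm h' P S hnd'
  have t1 := fun p => @mx_move W _ u v hu hv m hm h P S hnd p
  have t2 := fun p => @mx_move W _ v u hv hu m hm h' P S hnd' p
  have f1 : {p | Mx (P ++ rho u v m ++ S) p ∧ N p}.Finite :=
    (finite_Mx _).subset fun p hp => hp.1
  have f2 : {p | Mx (P ++ rho v u m ++ S) p ∧ N p}.Finite :=
    (finite_Mx _).subset fun p hp => hp.1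
  have e : {p | Mx (P ++ rho u v m ++ S) p ∧ N p} \ {(u, v)} =
      {p | Mx (P ++ rho v u m ++ S) p ∧ N p} \ {(v, u)} := by
    ext p
    simp only [Set.mem_diff, Set.mem_setOf_eq, Set.mem_singleton_iff]
    constructor
    · rintro ⟨⟨a, b⟩, c⟩
      exact ⟨⟨t1 p c a, b⟩, fun hh => n1 (hh ▸ a)⟩
    · rintro ⟨⟨a, b⟩, c⟩
      exact ⟨⟨t2 p c a, b⟩, fun hh => n2 (hh ▸ a)⟩
  have c1 : ({p | Mx (P ++ rho u v m ++ S) p ∧ N p} \ {(u, v)}).ncard +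
      (if N (u, v) then 1 else 0) = {p | Mx (P ++ rho u v m ++ S) p ∧ N p}.ncard := by
    split_ifs with hN
    · exact Set.ncard_diff_singleton_add_one ⟨m1, hN⟩ f1
    · rw [Set.diff_singleton_eq_self (fun hh => hN hh.2), add_zero]
  have c2 : ({p | Mx (P ++ rho v u m ++ S) p ∧ N p} \ {(v, u)}).ncard +
      (if N (v, u) then 1 else 0) = {p | Mx (P ++ rho v u m ++ S) p ∧ N p}.ncard := by
    split_ifs with hN
    · exact Set.ncard_diff_singleton_add_one ⟨m2, hN⟩ f2
    · rw [Set.diff_singleton_eq_self (fun hh => hN hh.2), add_zero]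
  rw [e] at c1
  omega

theorem lis_append {B : Type*} {M : CoxeterMatrix B} (cs : CoxeterSystem M W) (a b : List B) :
    cs.leftInvSeq (a ++ b) =
      cs.leftInvSeq a ++ (cs.leftInvSeq b).map (MulAut.conj (cs.wordProd a)) := by
  induction a with
  | nil => simp
  | cons i a ih =>
    simp only [List.cons_append, CoxeterSystem.leftInvSeq, ih, List.map_append, List.map_map,
      CoxeterSystem.wordProd_cons, map_mul]
    rfl

theorem altList_succ {α : Type*} (i j : α) (m : ℕ) :
    altList i j (m + 1) = i :: altList j i m := by
  simp only [altList, List.range_succ_eq_map, List.map_cons, List.map_map]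
  congr 1
  apply List.map_congr_left
  intro k _
  simp only [Function.comp]
  rcases Nat.mod_two_eq_zero_or_one k with h | h
  · have : (k + 1) % 2 = 1 := by omega
    simp [h, this]
  · have : (k + 1) % 2 = 0 := by omega
    simp [h, this]

theorem lis_altList {B : Type*} {M : CoxeterMatrix B} (cs : CoxeterSystem M W) (i j : B) (m : ℕ) :
    cs.leftInvSeq (altList i j m) = rho (cs.simple i) (cs.simple j) m := by
  induction m generalizing i j with
  | zero => simp [altList, rho]
  | succ m ih =>
    rw [altList_succ]
    simp only [CoxeterSystem.leftInvSeq, ih]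
    simp only [rho, List.range_succ_eq_map, List.map_cons, List.map_map]
    congr 1
    · simp
    · apply List.map_congr_left
      intro k _
      simp only [Function.comp, MulAut.conj_apply, CoxeterSystem.inv_simple]
      rw [← mul_assoc, ← mul_pow_mul]
      simp only [pow_succ, mul_assoc]

theorem map_rho (q x y : W) (m : ℕ) :
    (rho x y m).map (MulAut.conj q) = rho (MulAut.conj q x) (MulAut.conj q y) m := by
  simp only [rho, List.map_map]
  apply List.map_congr_left
  intro k _
  simp only [Function.comp, map_mul, map_pow]

theorem braid_step {B : Type*} {M : CoxeterMatrix B} (cs : CoxeterSystem M W) (i j : B)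
    (a b : List B) (ha : cs.IsReduced a) (hab : cs.wordProd a = cs.wordProd b)
    (hm : IsBraidMove cs i j a b) (s t : B) :
    {p : W × W | Mx (cs.leftInvSeq b) p ∧
        ∃ q : W, q * p.1 * q⁻¹ = cs.simple s ∧ q * p.2 * q⁻¹ = cs.simple t}.ncard +
      (if SimConj cs (i, j) (s, t) then 1 else 0) =
    {p : W × W | Mx (cs.leftInvSeq a) p ∧
        ∃ q : W, q * p.1 * q⁻¹ = cs.simple s ∧ q * p.2 * q⁻¹ = cs.simple t}.ncard +
      (if SimConj cs (i, j) (t, s) then 1 else 0) := by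
  obtain ⟨hij, hM, n, -, ea, eb⟩ := hm
  generalize a.take n = P at ea eb
  generalize a.drop (n + M.M i j) = S at ea eb
  have hnd := CoxeterSystem.IsReduced.nodup_leftInvSeq cs ha
  have hM1 : M.M i j ≠ 1 := M.off_diagonal i j hij
  have hpow : (cs.simple i * cs.simple j) ^ M.M i j = 1 := cs.simple_mul_simple_pow i j
  subst eb
  rw [ea] at hab hnd ⊢
  simp only [CoxeterSystem.wordProd_append] at hab
  have hab' := mul_right_cancel hab
  simp only [lis_append, lis_altList, map_rho, CoxeterSystem.wordProd_append] at hnd ⊢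
  rw [hab'] at hnd ⊢
  set q := cs.wordProd P
  have key := count_step (u := MulAut.conj q (cs.simple i)) (v := MulAut.conj q (cs.simple j))
    (by rw [← map_mul]; simp) (by rw [← map_mul]; simp) (m := M.M i j) (by omega)
    (by rw [← map_mul, ← map_pow, hpow, map_one]) _ _ hnd
    (fun p => ∃ q : W, q * p.1 * q⁻¹ = cs.simple s ∧ q * p.2 * q⁻¹ = cs.simple t)
  have s1 : ∀ i j : B, (∃ r : W, r * (MulAut.conj q (cs.simple i)) * r⁻¹ = cs.simple s ∧
      r * (MulAut.conj q (cs.simple j)) * r⁻¹ = cs.simple t) ↔ SimConj cs (i, j) (s, t) := by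
    intro i j
    constructor
    · rintro ⟨r, h1, h2⟩
      refine ⟨r * q, ?_, ?_⟩
      · rw [← h1]; simp only [MulAut.conj_apply]; group
      · rw [← h2]; simp only [MulAut.conj_apply]; group
    · rintro ⟨r, h1, h2⟩
      refine ⟨r * q⁻¹, ?_, ?_⟩
      · rw [← h1]; simp only [MulAut.conj_apply]; group
      · rw [← h2]; simp only [MulAut.conj_apply]; group
  have s2 : SimConj cs (j, i) (s, t) ↔ SimConj cs (i, j) (t, s) :=
    ⟨fun ⟨r, h1, h2⟩ => ⟨r, h2, h1⟩, fun ⟨r, h1, h2⟩ => ⟨r, h2, h1⟩⟩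
  simp only [s1, s2] at key
  exact key

end CCB

/-- Let `C` be a directed cycle `→c_0, →c_1, …, →c_k = →c_0` in the
graph `R(w)` of reduced expressions of `w`, where `→c_{n+1}` is obtained from `→c_n` by
an `(s_{f n}, s_{g n})`-braid move. Fix a color `c = [(s,t)]` (with `(s,t) ∈ 𝔐`). Then
the number of arcs of `C` colored `c` equals the number of arcs colored `c^op = [(t,s)]`. -/
theorem cycle_color_balance {B W : Type*} [Group W] {M : CoxeterMatrix B}
    (cs : CoxeterSystem M W) (w : W) (k : ℕ) (c : ℕ → List B) (f g : ℕ → B)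
    (hred : ∀ n ≤ k, cs.IsReduced (c n) ∧ cs.wordProd (c n) = w)
    (hcyc : c k = c 0)
    (hmove : ∀ n < k, IsBraidMove cs (f n) (g n) (c n) (c (n + 1)))
    (s t : B) (hst : s ≠ t) (hfin : M.M s t ≠ 0) :
    ((Finset.range k).filter (fun n => SimConj cs (f n, g n) (s, t))).card =
    ((Finset.range k).filter (fun n => SimConj cs (f n, g n) (t, s))).card := by
  let F : ℕ → ℕ := fun n => {p : W × W | CCB.Mx (cs.leftInvSeq (c n)) p ∧
        ∃ q : W, q * p.1 * q⁻¹ = cs.simple s ∧ q * p.2 * q⁻¹ = cs.simple t}.ncard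
  have step : ∀ n < k, F (n + 1) + (if SimConj cs (f n, g n) (s, t) then 1 else 0) =
      F n + (if SimConj cs (f n, g n) (t, s) then 1 else 0) := fun n hn =>
    CCB.braid_step cs (f n) (g n) (c n) (c (n + 1)) (hred n hn.le).1
      ((hred n hn.le).2.trans (hred (n + 1) hn).2.symm) (hmove n hn) s t
  have tot : ∀ l ≤ k, F l + ∑ n ∈ Finset.range l, (if SimConj cs (f n, g n) (s, t) then 1 else 0) =
      F 0 + ∑ n ∈ Finset.range l, (if SimConj cs (f n, g n) (t, s) then 1 else 0) := by
    intro l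
    induction l with
    | zero => simp
    | succ l ih =>
      intro hl
      have h1 := ih (by omega)
      have h2 := step l hl
      rw [Finset.sum_range_succ, Finset.sum_range_succ]
      omega
  have hk := tot k le_rfl
  have hF : F k = F 0 := by simp only [F, hcyc]
  rw [Finset.card_filter, Finset.card_filter]
  omega
end

section
/- Let (W,S) be a Coxeter group and w ∈ W. In the edge-colored directed graph R(w) of reduced expressions for w with arcs given by braid moves colored by conjugacy classes [(s,t)], let C be any directed cycle and c = [(s,t)] any color with opposite c^op = [(t,s)]. Then the total number of arcs of C whose color lies in {c, c^op} is even. In particular, every directed cycle of R(w) has even length. -/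
open scoped Classical

section Helpers

variable {B W : Type*} [Group W] {M : CoxeterMatrix B} (cs : CoxeterSystem M W)

theorem altList_succ {α : Type*} (s t : α) (m : ℕ) :
    altList s t (m + 1) = s :: altList t s m := by
  simp only [altList, List.range_succ_eq_map, List.map_cons, List.map_map]
  refine congrArg₂ _ (by simp) (List.map_congr_left fun k _ => ?_)
  simp only [Function.comp]
  rcases Nat.mod_two_eq_zero_or_one k with h | h
  · rw [if_neg (by omega), if_pos h]
  · rw [if_pos (by omega), if_neg (by omega)]

theorem altList_length {α : Type*} (s t : α) (m : ℕ) : (altList s t m).length = m := by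
  simp [altList]

theorem conj_alt_pow (a b : W) (ha : a * a = 1) (k : ℕ) :
    a * ((b * a) ^ k * b) * a⁻¹ = (a * b) ^ (k + 1) * a := by
  have h : a⁻¹ = a := inv_eq_of_mul_eq_one_right ha
  rw [h]
  have : ∀ k : ℕ, a * (b * a) ^ k = (a * b) ^ k * a := by
    intro k
    induction k with
    | zero => simp
    | succ k ih => rw [pow_succ, ← mul_assoc, ih, pow_succ]; group
  rw [← mul_assoc, this, pow_succ]
  group

theorem lis_altList (i j : B) (m : ℕ) :
    cs.leftInvSeq (altList i j m) =
      (List.range m).map (fun k => (cs.simple i * cs.simple j) ^ k * cs.simple i) := by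
  induction m generalizing i j with
  | zero => simp [altList]
  | succ m ih =>
    rw [altList_succ, CoxeterSystem.leftInvSeq, ih, List.range_succ_eq_map]
    simp only [List.map_cons, List.map_map]
    refine congrArg₂ _ (by simp) (List.map_congr_left fun k _ => ?_)
    simp only [Function.comp, MulAut.conj_apply]
    exact conj_alt_pow _ _ (cs.simple_mul_simple_self i) k

theorem wordProd_altList_two_mul (i j : B) (m : ℕ) :
    cs.wordProd (altList i j (2 * m)) = (cs.simple i * cs.simple j) ^ m := by
  induction m with
  | zero => simp [altList]
  | succ m ih =>
    rw [show 2 * (m + 1) = 2 * m + 1 + 1 by ring, altList_succ, altList_succ,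
      cs.wordProd_cons, cs.wordProd_cons, ih, pow_succ']
    group

theorem altList_concat {α : Type*} (s t : α) (m : ℕ) :
    altList s t (m + 1) = altList s t m ++ [if m % 2 = 0 then s else t] := by
  simp [altList, List.range_succ]

theorem altList_reverse_two_mul {α : Type*} (s t : α) (m : ℕ) :
    (altList s t (2 * m)).reverse = altList t s (2 * m) := by
  induction m with
  | zero => simp [altList]
  | succ m ih =>
    rw [show 2 * (m + 1) = 2 * m + 1 + 1 by ring, altList_concat s t, altList_concat s t,
      altList_succ t s, altList_succ s t]
    rw [List.reverse_append, List.reverse_append, ih,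
      if_neg (by omega), if_pos (by omega)]
    simp

theorem lis_append (ω ω' : List B) :
    cs.leftInvSeq (ω ++ ω') =
      cs.leftInvSeq ω ++ (cs.leftInvSeq ω').map (MulAut.conj (cs.wordProd ω)) := by
  induction ω with
  | nil => simp
  | cons i ω ih =>
    rw [List.cons_append, CoxeterSystem.leftInvSeq, ih, CoxeterSystem.leftInvSeq]
    simp [cs.wordProd_cons, List.map_map, Function.comp_def, mul_assoc]

/-- The signed action of a simple reflection on pairs. -/
noncomputable def rAct (i : B) : Equiv.Perm (W × ZMod 2) where
  toFun p := (cs.simple i * p.1 * cs.simple i, p.2 + if p.1 = cs.simple i then 1 else 0)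
  invFun p := (cs.simple i * p.1 * cs.simple i, p.2 + if p.1 = cs.simple i then 1 else 0)
  left_inv p := by
    have h : cs.simple i * p.1 * cs.simple i = cs.simple i ↔ p.1 = cs.simple i := by
      constructor
      · intro h
        have := congrArg (fun z => cs.simple i * z * cs.simple i) h
        simpa [mul_assoc] using this
      · intro h; simp [h]
    ext
    · simp [mul_assoc]
    · simp only [h, add_assoc]
      split_ifs
      · rw [show (1 + 1 : ZMod 2) = 0 by decide]; simp
      · simp
  right_inv p := by
    have h : cs.simple i * p.1 * cs.simple i = cs.simple i ↔ p.1 = cs.simple i := by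
      constructor
      · intro h
        have := congrArg (fun z => cs.simple i * z * cs.simple i) h
        simpa [mul_assoc] using this
      · intro h; simp [h]
    ext
    · simp [mul_assoc]
    · simp only [h, add_assoc]
      split_ifs
      · rw [show (1 + 1 : ZMod 2) = 0 by decide]; simp
      · simp

theorem rAct_prod (ω : List B) (t : W) (e : ZMod 2) :
    (ω.map (rAct cs)).prod (t, e) =
      (cs.wordProd ω * t * (cs.wordProd ω)⁻¹,
        e + ((cs.leftInvSeq ω.reverse).count t : ZMod 2)) := by
  induction ω with
  | nil => simp
  | cons i ω ih =>
    rw [List.map_cons, List.prod_cons, Equiv.Perm.mul_apply, ih]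
    rw [List.reverse_cons, ← List.concat_eq_append, cs.leftInvSeq_concat, List.concat_eq_append,
      List.count_append]
    have h : cs.wordProd ω * t * (cs.wordProd ω)⁻¹ = cs.simple i ↔
        cs.wordProd ω.reverse * cs.simple i * (cs.wordProd ω.reverse)⁻¹ = t := by
      rw [cs.wordProd_reverse, inv_inv]
      constructor
      · intro h; rw [← h]; group
      · intro h; rw [← h]; group
    simp only [rAct, Equiv.coe_fn_mk, h]
    ext
    · simp [cs.wordProd_cons, mul_assoc]
    · simp only [List.count_singleton, beq_iff_eq, Nat.cast_add, Nat.cast_ite, Nat.cast_one,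
        Nat.cast_zero, add_assoc]

theorem prod_altList_two_mul {G : Type*} [Monoid G] (r : B → G) (i j : B) (m : ℕ) :
    ((altList i j (2 * m)).map r).prod = (r i * r j) ^ m := by
  induction m with
  | zero => simp [altList]
  | succ m ih =>
    rw [show 2 * (m + 1) = 2 * m + 1 + 1 by ring, altList_succ, altList_succ]
    simp [ih, pow_succ', mul_assoc]

theorem rAct_liftable : M.IsLiftable (rAct cs) := by
  intro i j
  rw [← prod_altList_two_mul]
  ext1 ⟨t, e⟩
  rw [rAct_prod, wordProd_altList_two_mul, altList_reverse_two_mul, lis_altList]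
  have hp : (cs.simple i * cs.simple j) ^ M i j = 1 := cs.simple_mul_simple_pow i j
  have hp' : (cs.simple j * cs.simple i) ^ M i j = 1 := cs.simple_mul_simple_pow' i j
  rw [hp, two_mul, List.range_add, List.map_append, List.map_map, List.count_append]
  have : ((fun k => (cs.simple j * cs.simple i) ^ k * cs.simple j) ∘ fun x => M i j + x) =
      (fun k => (cs.simple j * cs.simple i) ^ k * cs.simple j) := by
    funext k
    simp [pow_add, hp']
  rw [this]
  push_cast
  rw [CharTwo.add_self_eq_zero]
  simp

theorem count_lis_eq (ω ω' : List B) (h : cs.wordProd ω = cs.wordProd ω') (t : W) :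
    ((cs.leftInvSeq ω).count t : ZMod 2) = ((cs.leftInvSeq ω').count t : ZMod 2) := by
  have key : ∀ ω : List B, cs.lift ⟨rAct cs, rAct_liftable cs⟩ (cs.wordProd ω) =
      (ω.map (rAct cs)).prod := by
    intro ω
    induction ω with
    | nil => simp
    | cons i ω ih => rw [cs.wordProd_cons, map_mul, ih, cs.lift_apply_simple]; simp
  have h2 : cs.wordProd ω.reverse = cs.wordProd ω'.reverse := by simp [h]
  have h3 : (ω.reverse.map (rAct cs)).prod (t, 0) = (ω'.reverse.map (rAct cs)).prod (t, 0) := by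
    rw [← key, ← key, h2]
  rw [rAct_prod, rAct_prod] at h3
  simpa using congrArg Prod.snd h3

/-- Parity of the number of occurrences of `t` in an inversion sequence of `w`. -/
noncomputable def eta (w t : W) : ZMod 2 :=
  ((cs.leftInvSeq (cs.wordProd_surjective w).choose).count t : ZMod 2)

theorem eta_wordProd (ω : List B) (t : W) :
    eta cs (cs.wordProd ω) t = ((cs.leftInvSeq ω).count t : ZMod 2) :=
  count_lis_eq cs _ _ (cs.wordProd_surjective (cs.wordProd ω)).choose_spec t

theorem eta_mul (x y t : W) : eta cs (x * y) t = eta cs x t + eta cs y (x⁻¹ * t * x) := by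
  obtain ⟨ω, rfl⟩ := cs.wordProd_surjective x
  obtain ⟨ω', rfl⟩ := cs.wordProd_surjective y
  rw [← cs.wordProd_append, eta_wordProd, eta_wordProd, eta_wordProd, lis_append,
    List.count_append]
  push_cast
  congr 2
  have h := List.count_map_of_injective (cs.leftInvSeq ω') (MulAut.conj (cs.wordProd ω))
    (MulEquiv.injective _) ((cs.wordProd ω)⁻¹ * t * cs.wordProd ω)
  have e : MulAut.conj (cs.wordProd ω) ((cs.wordProd ω)⁻¹ * t * cs.wordProd ω) = t := by
    simp [mul_assoc]
  rw [e] at h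
  exact h

theorem eta_simple (i : B) (t : W) :
    eta cs (cs.simple i) t = if t = cs.simple i then 1 else 0 := by
  have h := eta_wordProd cs [i] t
  rw [cs.wordProd_singleton, cs.leftInvSeq_singleton, List.count_singleton] at h
  rw [h]
  by_cases ht : t = cs.simple i
  · simp [ht]
  · have ht' : ¬ cs.simple i = t := fun h => ht h.symm
    simp [ht, ht']

theorem eta_length {w t : W} (h : eta cs w t ≠ 0) : cs.length (t * w) < cs.length w := by
  obtain ⟨ω, hω, rfl⟩ := cs.exists_isReduced w
  rw [eta_wordProd] at h
  have : t ∈ cs.leftInvSeq ω := by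
    by_contra hn
    rw [List.count_eq_zero_of_not_mem hn] at h
    simp at h
  exact (cs.isLeftInversion_of_mem_leftInvSeq hω this).2

/-- Standard parabolic subgroups. -/
def para (I : Set B) : Subgroup W where
  carrier := {x | ∃ ω : List B, (∀ i ∈ ω, i ∈ I) ∧ cs.wordProd ω = x}
  one_mem' := ⟨[], by simp, by simp⟩
  mul_mem' := by
    rintro _ _ ⟨ω, h, rfl⟩ ⟨ω', h', rfl⟩
    refine ⟨ω ++ ω', ?_, cs.wordProd_append _ _⟩
    intro i hi
    rcases List.mem_append.1 hi with hi | hi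
    · exact h i hi
    · exact h' i hi
  inv_mem' := by
    rintro _ ⟨ω, h, rfl⟩
    exact ⟨ω.reverse, by simpa using h, by simp⟩

theorem simple_mem_para {I : Set B} {i : B} (hi : i ∈ I) : cs.simple i ∈ para cs I :=
  ⟨[i], by simpa using hi, by simp⟩

theorem lis_mem_para {I : Set B} {ω : List B} (h : ∀ i ∈ ω, i ∈ I) :
    ∀ t ∈ cs.leftInvSeq ω, t ∈ para cs I := by
  induction ω with
  | nil => simp
  | cons i ω ih =>
    have hi := simple_mem_para cs (h i (by simp))
    intro t ht
    rw [CoxeterSystem.leftInvSeq, List.mem_cons, List.mem_map] at ht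
    rcases ht with rfl | ⟨u, hu, rfl⟩
    · exact hi
    · have := ih (fun j hj => h j (by simp [hj])) u hu
      rw [MulAut.conj_apply]
      exact mul_mem (mul_mem hi this) (inv_mem hi)

theorem para_conj {I J : Set B} {q : W} (h : ∀ i ∈ I, q * cs.simple i * q⁻¹ ∈ para cs J)
    {x : W} (hx : x ∈ para cs I) : q * x * q⁻¹ ∈ para cs J := by
  obtain ⟨ω, hω, rfl⟩ := hx
  induction ω with
  | nil => simp
  | cons i ω ih =>
    have := mul_mem (h i (hω i (by simp))) (ih fun j hj => hω j (by simp [hj]))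
    rw [cs.wordProd_cons]
    convert this using 1
    group

theorem eta_para {I : Set B} {x t : W} (hx : x ∈ para cs I) (h : eta cs x t ≠ 0) :
    t ∈ para cs I := by
  obtain ⟨ω, hω, rfl⟩ := hx
  rw [eta_wordProd] at h
  refine lis_mem_para cs hω t ?_
  by_contra hn
  rw [List.count_eq_zero_of_not_mem hn] at h
  simp at h

theorem eta_exists {I : Set B} {x : W} (hx : x ∈ para cs I) (h1 : x ≠ 1) :
    ∃ i ∈ I, eta cs x (cs.simple i) ≠ 0 := by
  have hx' : ∃ n : ℕ, ∃ ω : List B, ω.length = n ∧ (∀ i ∈ ω, i ∈ I) ∧ cs.wordProd ω = x := by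
    obtain ⟨ω, h, h'⟩ := hx
    exact ⟨_, ω, rfl, h, h'⟩
  obtain ⟨ω, hlen, hω, rfl⟩ := Nat.find_spec hx'
  have hmin : ∀ ω' : List B, (∀ i ∈ ω', i ∈ I) → cs.wordProd ω' = cs.wordProd ω →
      ω.length ≤ ω'.length := by
    intro ω' h h'
    rw [hlen]
    exact Nat.find_min' hx' ⟨ω', rfl, h, h'⟩
  clear hlen hx' 
  cases ω with
  | nil => simp at h1
  | cons i ω =>
    refine ⟨i, hω i (by simp), ?_⟩
    rw [eta_wordProd, CoxeterSystem.leftInvSeq, List.count_cons]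
    have hn : cs.simple i ∉ (cs.leftInvSeq ω).map (MulAut.conj (cs.simple i)) := by
      intro hm
      obtain ⟨u, hu, hu'⟩ := List.mem_map.1 hm
      have hu2 : u = cs.simple i := by
        have := congrArg (fun z => cs.simple i * z * cs.simple i) hu'
        simpa [mul_assoc] using this
      subst hu2
      obtain ⟨j, hj, hj'⟩ := List.mem_iff_getElem.1 hu
      have h2 := cs.getD_leftInvSeq_mul_wordProd ω j
      rw [List.getD_eq_getElem _ _ hj, hj', ← cs.wordProd_cons] at h2
      rw [cs.length_leftInvSeq] at hj
      have h3 := hmin (ω.eraseIdx j)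
        (fun a ha => hω a (by simp [List.mem_of_mem_eraseIdx ha])) h2.symm
      have := List.length_eraseIdx_add_one hj
      simp at h3
      omega
    rw [List.count_eq_zero_of_not_mem hn]
    simp

theorem eta_conj {I J : Set B} {d : W} (hI : ∀ x ∈ para cs I, cs.length d ≤ cs.length (x * d))
    (hJ : ∀ y ∈ para cs J, cs.length d ≤ cs.length (d * y)) {x : W} (hx : x ∈ para cs I)
    (hxJ : d⁻¹ * x * d ∈ para cs J) (t : W) :
    eta cs x t = eta cs (d⁻¹ * x * d) (d⁻¹ * t * d) := by
  have zI : ∀ t ∈ para cs I, eta cs d t = 0 := by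
    intro t ht
    by_contra h
    exact absurd (eta_length cs h) (not_lt.2 (hI t ht))
  have zJ : ∀ t, d⁻¹ * t * d ∈ para cs J → eta cs d t = 0 := by
    intro t ht
    by_contra h
    have h1 := eta_length cs h
    have h2 := hJ _ ht
    rw [show d * (d⁻¹ * t * d) = t * d by group] at h2
    omega
  have e1 := eta_mul cs x d t
  have e2 := eta_mul cs d (d⁻¹ * x * d) t
  rw [show d * (d⁻¹ * x * d) = x * d by group] at e2
  rw [e1] at e2
  by_cases htI : t ∈ para cs I
  · rw [zI t htI, zI _ (mul_mem (mul_mem (inv_mem hx) htI) hx)] at e2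
    simpa using e2
  · by_cases htJ : d⁻¹ * t * d ∈ para cs J
    · rw [zJ t htJ, zJ (x⁻¹ * t * x)] at e2
      · simpa using e2
      · have := mul_mem (mul_mem (inv_mem hxJ) htJ) hxJ
        convert this using 1
        group
    · have h1 : eta cs x t = 0 := by
        by_contra h
        exact htI (eta_para cs hx h)
      have h2 : eta cs (d⁻¹ * x * d) (d⁻¹ * t * d) = 0 := by
        by_contra h
        exact htJ (eta_para cs hxJ h)
      rw [h1, h2]

theorem key_descent {I J : Set B} {d : W}
    (hI : ∀ x ∈ para cs I, cs.length d ≤ cs.length (x * d))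
    (hJ : ∀ y ∈ para cs J, cs.length d ≤ cs.length (d * y)) {x : W} (hx : x ∈ para cs I)
    (hxJ : d⁻¹ * x * d ∈ para cs J) (h1 : x ≠ 1) :
    ∃ i ∈ I, eta cs x (cs.simple i) ≠ 0 ∧ ∃ a ∈ J, d⁻¹ * cs.simple i * d = cs.simple a := by
  obtain ⟨i, hi, he⟩ := eta_exists cs hx h1
  refine ⟨i, hi, he, ?_⟩
  have he' := he
  rw [eta_conj cs hI hJ hx hxJ] at he'
  have hs := eta_para cs hxJ he'
  have hsi := simple_mem_para cs hi
  have hne : d⁻¹ * cs.simple i * d ≠ 1 := by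
    intro h
    have h2 : cs.simple i = 1 := by
      have := congrArg (fun z => d * z * d⁻¹) h
      simpa [mul_assoc] using this
    have := cs.length_simple i
    rw [h2, cs.length_one] at this
    omega
  obtain ⟨a, ha, hea⟩ := eta_exists cs hs hne
  refine ⟨a, ha, ?_⟩
  have e := eta_conj cs hI hJ hsi hs (d * cs.simple a * d⁻¹)
  rw [show d⁻¹ * (d * cs.simple a * d⁻¹) * d = cs.simple a by group] at e
  rw [← e, eta_simple] at hea
  have h3 : d * cs.simple a * d⁻¹ = cs.simple i := by
    by_contra h
    simp [h] at hea
  rw [← h3]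
  group

theorem key_two {I J : Set B} {d : W}
    (hI : ∀ x ∈ para cs I, cs.length d ≤ cs.length (x * d))
    (hJ : ∀ y ∈ para cs J, cs.length d ≤ cs.length (d * y)) {x y : W} (hx : x ∈ para cs I)
    (hxJ : d⁻¹ * x * d ∈ para cs J) (hx1 : x ≠ 1) (hy : y ∈ para cs I)
    (hyJ : d⁻¹ * y * d ∈ para cs J) (hy1 : y ≠ 1) (hxy : x ≠ y) :
    ∃ i ∈ I, ∃ j ∈ I, cs.simple i ≠ cs.simple j ∧ (∃ a ∈ J, d⁻¹ * cs.simple i * d = cs.simple a) ∧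
      ∃ a ∈ J, d⁻¹ * cs.simple j * d = cs.simple a := by
  obtain ⟨i, hi, -, a, ha, hia⟩ := key_descent cs hI hJ hx hxJ hx1
  obtain ⟨z, hz, hzJ, hz1, hzi⟩ : ∃ z, z ∈ para cs I ∧ d⁻¹ * z * d ∈ para cs J ∧ z ≠ 1 ∧
      z ≠ cs.simple i := by
    by_cases h : x = cs.simple i
    · exact ⟨y, hy, hyJ, hy1, fun h' => hxy (h.trans h'.symm)⟩
    · exact ⟨x, hx, hxJ, hx1, h⟩
  obtain ⟨j, hj, hej, hja⟩ := key_descent cs hI hJ hz hzJ hz1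
  by_cases hij : cs.simple i = cs.simple j
  · have h1 : cs.simple i * z ∈ para cs I := mul_mem (simple_mem_para cs hi) hz
    have h2 : d⁻¹ * (cs.simple i * z) * d ∈ para cs J := by
      have := mul_mem (simple_mem_para cs ha) hzJ
      rw [← hia] at this
      convert this using 1
      group
    have h3 : cs.simple i * z ≠ 1 := by
      intro h
      apply hzi
      rw [← cs.inv_simple i]
      exact eq_inv_of_mul_eq_one_right h
    obtain ⟨l, hl, hel, hla⟩ := key_descent cs hI hJ h1 h2 h3
    refine ⟨i, hi, l, hl, ?_, ⟨a, ha, hia⟩, hla⟩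
    intro hil
    rw [← hil, eta_mul, eta_simple] at hel
    rw [← hij] at hej
    have h4 : ∀ u : ZMod 2, u ≠ 0 → 1 + u = 0 := by decide
    apply hel
    rw [if_pos rfl]
    apply h4
    simpa using hej
  · exact ⟨i, hi, j, hj, hij, ⟨a, ha, hia⟩, hja⟩

theorem main_conj {i j a b : B} {α β x y : W} (hx1 : x ≠ 1) (hy1 : y ≠ 1) (hxy : x ≠ y)
    (hxI : α⁻¹ * x * α ∈ para cs {i, j}) (hyI : α⁻¹ * y * α ∈ para cs {i, j})
    (hxJ : β⁻¹ * x * β ∈ para cs {a, b}) (hyJ : β⁻¹ * y * β ∈ para cs {a, b}) :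
    (SimConj cs (i, j) (a, b) ∨ SimConj cs (i, j) (b, a)) ∧
      ∀ z : W, α⁻¹ * z * α ∈ para cs {i, j} ↔ β⁻¹ * z * β ∈ para cs {a, b} := by
  have hex : ∃ n : ℕ, ∃ p ∈ para cs {i, j}, ∃ q ∈ para cs {a, b},
      cs.length (p * (α⁻¹ * β) * q) = n := ⟨_, 1, one_mem _, 1, one_mem _, rfl⟩
  obtain ⟨p, hp, q, hq, hlen⟩ := Nat.find_spec hex
  have hmin : ∀ p' ∈ para cs {i, j}, ∀ q' ∈ para cs {a, b},
      cs.length (p * (α⁻¹ * β) * q) ≤ cs.length (p' * (α⁻¹ * β) * q') := by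
    intro p' hp' q' hq'
    rw [hlen]
    exact Nat.find_min' hex ⟨p', hp', q', hq', rfl⟩
  clear hlen
  set d := p * (α⁻¹ * β) * q with hd
  have hI : ∀ x ∈ para cs {i, j}, cs.length d ≤ cs.length (x * d) := by
    intro u hu
    have := hmin (u * p) (mul_mem hu hp) q hq
    rwa [show u * p * (α⁻¹ * β) * q = u * d by rw [hd]; group] at this
  have hJ : ∀ y ∈ para cs {a, b}, cs.length d ≤ cs.length (d * y) := by
    intro u hu
    have := hmin p hp (q * u) (mul_mem hq hu)
    rwa [show p * (α⁻¹ * β) * (q * u) = d * u by rw [hd]; group] at this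
  have cI : ∀ z : W, p * (α⁻¹ * z * α) * p⁻¹ ∈ para cs {i, j} ↔ α⁻¹ * z * α ∈ para cs {i, j} := by
    intro z
    rw [Subgroup.mul_mem_cancel_right _ (inv_mem hp), Subgroup.mul_mem_cancel_left _ hp]
  have cJ : ∀ z : W, d⁻¹ * (p * (α⁻¹ * z * α) * p⁻¹) * d ∈ para cs {a, b} ↔
      β⁻¹ * z * β ∈ para cs {a, b} := by
    intro z
    rw [show d⁻¹ * (p * (α⁻¹ * z * α) * p⁻¹) * d = q⁻¹ * (β⁻¹ * z * β) * q by rw [hd]; group]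
    rw [Subgroup.mul_mem_cancel_right _ hq, Subgroup.mul_mem_cancel_left _ (inv_mem hq)]
  have n1 : ∀ z : W, z ≠ 1 → p * (α⁻¹ * z * α) * p⁻¹ ≠ 1 := by
    intro z hz h
    apply hz
    have := congrArg (fun u => α * p⁻¹ * u * p * α⁻¹) h
    simpa [mul_assoc] using this
  have nxy : p * (α⁻¹ * x * α) * p⁻¹ ≠ p * (α⁻¹ * y * α) * p⁻¹ := by
    intro h
    apply hxy
    simpa using h
  obtain ⟨i0, hi0, j0, hj0, hne, ⟨a0, ha0, hia⟩, b0, hb0, hjb⟩ :=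
    key_two cs hI hJ ((cI x).2 hxI) ((cJ x).2 hxJ) (n1 x hx1) ((cI y).2 hyI) ((cJ y).2 hyJ)
      (n1 y hy1) nxy
  have hne2 : cs.simple a0 ≠ cs.simple b0 := by
    rw [← hia, ← hjb]
    intro h
    apply hne
    simpa using h
  obtain ⟨q', hq', hc⟩ : ∃ q' : W, q' = d⁻¹ ∧
      ((q' * cs.simple i * q'⁻¹ = cs.simple a ∧ q' * cs.simple j * q'⁻¹ = cs.simple b) ∨
      (q' * cs.simple i * q'⁻¹ = cs.simple b ∧ q' * cs.simple j * q'⁻¹ = cs.simple a)) := by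
    refine ⟨d⁻¹, rfl, ?_⟩
    rw [inv_inv]
    simp only [Set.mem_insert_iff, Set.mem_singleton_iff] at hi0 hj0 ha0 hb0
    rcases hi0 with rfl | rfl <;> rcases hj0 with rfl | rfl <;> rcases ha0 with rfl | rfl <;>
      rcases hb0 with rfl | rfl <;> simp_all
  refine ⟨?_, ?_⟩
  · rcases hc with hc | hc
    · exact Or.inl ⟨q', hc⟩
    · exact Or.inr ⟨q', hc⟩
  · intro z
    rw [← cI, ← cJ]
    have sa : cs.simple a ∈ para cs {a, b} := simple_mem_para cs (by simp)
    have sb : cs.simple b ∈ para cs {a, b} := simple_mem_para cs (by simp)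
    have si : cs.simple i ∈ para cs {i, j} := simple_mem_para cs (by simp)
    have sj : cs.simple j ∈ para cs {i, j} := simple_mem_para cs (by simp)
    have f1 : ∀ l ∈ ({i, j} : Set B), q' * cs.simple l * q'⁻¹ ∈ para cs {a, b} := by
      intro l hl
      simp only [Set.mem_insert_iff, Set.mem_singleton_iff] at hl
      rcases hl with rfl | rfl <;> rcases hc with ⟨h1, h2⟩ | ⟨h1, h2⟩ <;>
        simp only [h1, h2, sa, sb]
    have f2 : ∀ l ∈ ({a, b} : Set B), q'⁻¹ * cs.simple l * q'⁻¹⁻¹ ∈ para cs {i, j} := by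
      intro l hl
      simp only [Set.mem_insert_iff, Set.mem_singleton_iff] at hl
      have e : ∀ u v : W, q' * u * q'⁻¹ = v → q'⁻¹ * v * q'⁻¹⁻¹ = u := by
        rintro u v rfl
        group
      rcases hl with rfl | rfl <;> rcases hc with ⟨h1, h2⟩ | ⟨h1, h2⟩ <;>
        simp only [e _ _ h1, e _ _ h2, si, sj]
    constructor
    · intro h
      have := para_conj cs f1 h
      rwa [hq', inv_inv] at this
    · intro h
      have := para_conj cs f2 h
      rw [hq', inv_inv] at this
      convert this using 1
      group

theorem para_pair_form {i j : B} {x : W} (hx : x ∈ para cs {i, j}) :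
    ∃ k : ℤ, x = (cs.simple i * cs.simple j) ^ k ∨
      x = (cs.simple i * cs.simple j) ^ k * cs.simple i := by
  set u := cs.simple i with hu
  set v := cs.simple j with hv
  have huu : u * u = 1 := cs.simple_mul_simple_self i
  have hvv : v * v = 1 := cs.simple_mul_simple_self j
  have hui : u⁻¹ = u := cs.inv_simple i
  have hvi : v⁻¹ = v := cs.inv_simple j
  have hc : ∀ k : ℤ, u * (u * v) ^ k = (u * v) ^ (-k) * u := by
    intro k
    have h1 : u * (u * v) ^ k * u⁻¹ = (u * (u * v) * u⁻¹) ^ k := by rw [conj_zpow]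
    have h2 : u * (u * v) * u⁻¹ = (u * v)⁻¹ := by
      rw [mul_inv_rev, hui, hvi, ← mul_assoc, huu, one_mul]
    rw [h2, inv_zpow', hui] at h1
    rw [← h1, mul_assoc, huu, mul_one]
  have hv' : v = (u * v) ^ (-1 : ℤ) * u := by
    rw [zpow_neg_one, mul_inv_rev, hui, hvi, mul_assoc, huu, mul_one]
  obtain ⟨ω, hω, rfl⟩ := hx
  induction ω with
  | nil => exact ⟨0, Or.inl (by simp)⟩
  | cons l ω ih =>
    obtain ⟨k, hk⟩ := ih fun j hj => hω j (by simp [hj])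
    have hu' : ∀ z : W, (∃ k : ℤ, z = (u * v) ^ k ∨ z = (u * v) ^ k * u) →
        ∃ k : ℤ, u * z = (u * v) ^ k ∨ u * z = (u * v) ^ k * u := by
      rintro z ⟨k, rfl | rfl⟩
      · exact ⟨-k, Or.inr (hc k)⟩
      · refine ⟨-k, Or.inl ?_⟩
        rw [← mul_assoc, hc, mul_assoc, huu, mul_one]
    have hl := hω l (by simp)
    simp only [Set.mem_insert_iff, Set.mem_singleton_iff] at hl
    rw [cs.wordProd_cons]
    rcases hl with rfl | rfl
    · exact hu' _ ⟨k, hk⟩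
    · obtain ⟨k', hk'⟩ := hu' _ ⟨k, hk⟩
      have e : v * cs.wordProd ω = (u * v) ^ (-1 : ℤ) * (u * cs.wordProd ω) := by
        rw [← mul_assoc, ← hv']
      rw [← hv, e]
      refine ⟨-1 + k', ?_⟩
      rw [zpow_add]
      rcases hk' with hk' | hk'
      · left; rw [hk']
      · right; rw [hk', mul_assoc]

theorem mem_lis_altList {i j : B} (hm : M i j ≠ 0) (x : W) :
    x ∈ cs.leftInvSeq (altList i j (M i j)) ↔ cs.IsReflection x ∧ x ∈ para cs {i, j} := by
  constructor
  · intro h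
    refine ⟨cs.isReflection_of_mem_leftInvSeq _ h, lis_mem_para cs ?_ x h⟩
    intro l hl
    simp only [altList, List.mem_map] at hl
    obtain ⟨k, -, rfl⟩ := hl
    split_ifs <;> simp
  · rintro ⟨hr, hx⟩
    obtain ⟨k, hk⟩ := para_pair_form cs hx
    have hmz : (0 : ℤ) < M i j := by exact_mod_cast Nat.pos_of_ne_zero hm
    obtain ⟨n, hn, hn'⟩ : ∃ n : ℕ, n < M i j ∧ (cs.simple i * cs.simple j) ^ k =
        (cs.simple i * cs.simple j) ^ n := by
      refine ⟨(k % (M i j : ℤ)).toNat, ?_, ?_⟩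
      · have := Int.emod_lt_of_pos k hmz
        have := Int.emod_nonneg k hmz.ne'
        omega
      · rw [← zpow_natCast, Int.toNat_of_nonneg (Int.emod_nonneg k hmz.ne')]
        conv_lhs => rw [← Int.emod_add_mul_ediv k (M i j)]
        rw [zpow_add, zpow_mul, zpow_natCast, cs.simple_mul_simple_pow]
        simp
    rw [hn'] at hk
    rw [lis_altList, List.mem_map]
    rcases hk with rfl | rfl
    · exfalso
      have h1 := hr.odd_length
      have h2 : ∀ n : ℕ, Even (cs.length ((cs.simple i * cs.simple j) ^ n)) := by
        intro n
        induction n with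
        | zero => simp
        | succ n ih =>
          rw [pow_succ, ← mul_assoc]
          have a1 := cs.length_mul_simple ((cs.simple i * cs.simple j) ^ n) i
          have a2 := cs.length_mul_simple ((cs.simple i * cs.simple j) ^ n * cs.simple i) j
          rw [Nat.even_iff] at ih ⊢
          omega
      exact Nat.not_even_iff_odd.2 h1 (h2 n)
    · exact ⟨n, List.mem_range.2 hn, rfl⟩

theorem lis_altList_reverse (i j : B) :
    cs.leftInvSeq (altList j i (M i j)) = (cs.leftInvSeq (altList i j (M i j))).reverse := by
  rw [lis_altList, lis_altList]
  apply List.ext_getElem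
  · simp
  · intro k h1 h2
    simp only [List.length_map, List.length_range, List.length_reverse] at h1 h2
    simp only [List.getElem_map, List.getElem_range, List.getElem_reverse, List.length_map,
      List.length_range]
    have e : ((cs.simple i * cs.simple j) ^ (M i j - 1 - k)) =
        (cs.simple j * cs.simple i) ^ (k + 1) := by
      have h3 : (cs.simple i * cs.simple j) ^ (M i j - 1 - k) *
          (cs.simple i * cs.simple j) ^ (k + 1) = 1 := by
        rw [← pow_add, show M i j - 1 - k + (k + 1) = M i j by omega, cs.simple_mul_simple_pow]
      rw [eq_inv_of_mul_eq_one_left h3, ← inv_pow, mul_inv_rev, cs.inv_simple, cs.inv_simple]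
    rw [e, pow_succ]
    simp [mul_assoc]

theorem arc_structure {i j : B} {a b : List B} (h : IsBraidMove cs i j a b)
    (hab : cs.wordProd a = cs.wordProd b) :
    ∃ (α : W) (A F C : List W), cs.leftInvSeq a = A ++ F ++ C ∧
      cs.leftInvSeq b = A ++ F.reverse ++ C ∧ 2 ≤ F.length ∧
      ∀ x, x ∈ F ↔ cs.IsReflection x ∧ α⁻¹ * x * α ∈ para cs {i, j} := by
  obtain ⟨hij, hm, p, hp, ha, hb⟩ := h
  change M i j ≠ 0 at hm
  change a = a.take p ++ altList i j (M i j) ++ a.drop (p + M i j) at ha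
  change b = a.take p ++ altList j i (M i j) ++ a.drop (p + M i j) at hb
  generalize a.take p = P at ha hb
  generalize a.drop (p + M i j) = Q at ha hb
  have hsw : cs.wordProd (altList j i (M i j)) = cs.wordProd (altList i j (M i j)) := by
    rw [ha, hb] at hab
    simp only [cs.wordProd_append] at hab
    exact (mul_left_cancel (mul_right_cancel hab)).symm
  refine ⟨cs.wordProd P, cs.leftInvSeq P,
    (cs.leftInvSeq (altList i j (M i j))).map (MulAut.conj (cs.wordProd P)),
    (cs.leftInvSeq Q).map (MulAut.conj (cs.wordProd (P ++ altList i j (M i j)))), ?_, ?_, ?_, ?_⟩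
  · rw [ha, lis_append, lis_append]
  · rw [hb, lis_append, lis_append, lis_altList_reverse, List.map_reverse]
    rw [cs.wordProd_append, cs.wordProd_append, hsw]
  · rw [List.length_map, cs.length_leftInvSeq, altList_length]
    have := M.off_diagonal i j hij
    change M i j ≠ 1 at this
    omega
  · intro x
    rw [List.mem_map]
    constructor
    · rintro ⟨u, hu, rfl⟩
      rw [mem_lis_altList cs hm] at hu
      rw [MulAut.conj_apply]
      refine ⟨hu.1.conj _, ?_⟩
      convert hu.2 using 1
      group
    · rintro ⟨h1, h2⟩
      refine ⟨_, (mem_lis_altList cs hm _).2 ⟨?_, h2⟩, ?_⟩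
      · have := h1.conj (cs.wordProd P)⁻¹
        rwa [inv_inv] at this
      · rw [MulAut.conj_apply]; group

theorem idx_reverse {α : Type*} {F : List α} (hF : F.Nodup) {u : α} (hu : u ∈ F) :
    F.reverse.idxOf u = F.length - 1 - F.idxOf u := by
  have h := List.idxOf_lt_length_of_mem hu
  have hk : F.length - 1 - F.idxOf u < F.reverse.length := by simp; omega
  have := (List.nodup_reverse.2 hF).idxOf_getElem (F.length - 1 - F.idxOf u) hk
  rw [← this]
  congr 1
  rw [List.getElem_reverse]
  have e : F.length - 1 - (F.length - 1 - F.idxOf u) = F.idxOf u := by omega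
  simp [e]

theorem flip_both {α : Type*} {A F C : List α} (h : (A ++ F ++ C).Nodup) {u v : α}
    (hu : u ∈ F) (hv : v ∈ F) (huv : u ≠ v) :
    ((A ++ F.reverse ++ C).idxOf u < (A ++ F.reverse ++ C).idxOf v) ↔
      ¬ ((A ++ F ++ C).idxOf u < (A ++ F ++ C).idxOf v) := by
  have hAF := (List.nodup_append.1 h).1
  obtain ⟨-, hF, hd⟩ := List.nodup_append.1 hAF
  have huA : u ∉ A := fun hh => hd u hh u hu rfl
  have hvA : v ∉ A := fun hh => hd v hh v hv rfl
  have h1 := List.idxOf_lt_length_of_mem hu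
  have h2 := List.idxOf_lt_length_of_mem hv
  have h3 : F.idxOf u ≠ F.idxOf v := fun e => huv ((List.idxOf_inj hu).1 e)
  rw [List.idxOf_append_of_mem (l₁ := A ++ F) (by simp [hu]),
    List.idxOf_append_of_mem (l₁ := A ++ F) (by simp [hv]),
    List.idxOf_append_of_mem (l₁ := A ++ F.reverse) (by simp [hu]),
    List.idxOf_append_of_mem (l₁ := A ++ F.reverse) (by simp [hv]),
    List.idxOf_append_of_notMem huA, List.idxOf_append_of_notMem hvA,
    List.idxOf_append_of_notMem huA, List.idxOf_append_of_notMem hvA,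
    idx_reverse hF hu, idx_reverse hF hv]
  omega

theorem flip_not {α : Type*} {A F C : List α} {u v : α}
    (huv : ¬ (u ∈ F ∧ v ∈ F)) :
    ((A ++ F.reverse ++ C).idxOf u < (A ++ F.reverse ++ C).idxOf v) ↔
      ((A ++ F ++ C).idxOf u < (A ++ F ++ C).idxOf v) := by
  have h1 : ∀ (F : List α) (x : α), x ∉ F → x ∉ A →
      (A ++ F ++ C).idxOf x = A.length + F.length + C.idxOf x := by
    intro F x hx hA
    rw [List.idxOf_append_of_notMem (by simp [hx, hA])]
    simp
  have h2 : ∀ (F : List α) (x : α), x ∈ A →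
      (A ++ F ++ C).idxOf x = A.idxOf x ∧ A.idxOf x < A.length := by
    intro F x hA
    rw [List.idxOf_append_of_mem (by simp [hA]), List.idxOf_append_of_mem hA]
    exact ⟨rfl, List.idxOf_lt_length_of_mem hA⟩
  have h3 : ∀ (F : List α) (x : α), x ∈ F → x ∉ A →
      A.length ≤ (A ++ F ++ C).idxOf x ∧ (A ++ F ++ C).idxOf x < A.length + F.length := by
    intro F x hx hA
    rw [List.idxOf_append_of_mem (by simp [hx]), List.idxOf_append_of_notMem hA]
    have := List.idxOf_lt_length_of_mem hx
    omega
  have hr : ∀ x : α, x ∈ F.reverse ↔ x ∈ F := fun x => List.mem_reverse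
  have hl : F.reverse.length = F.length := List.length_reverse
  have key : ∀ x : α, (A ++ F.reverse ++ C).idxOf x = (A ++ F ++ C).idxOf x ∧
      ((A ++ F ++ C).idxOf x < A.length ∨ A.length + F.length ≤ (A ++ F ++ C).idxOf x) ∨
      x ∈ F ∧ (A.length ≤ (A ++ F ++ C).idxOf x ∧ (A ++ F ++ C).idxOf x < A.length + F.length) ∧
      A.length ≤ (A ++ F.reverse ++ C).idxOf x ∧
        (A ++ F.reverse ++ C).idxOf x < A.length + F.length := by
    intro x
    by_cases hA : x ∈ A
    · have := h2 F x hA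
      have := h2 F.reverse x hA
      left; omega
    · by_cases hF : x ∈ F
      · right
        have a1 := h3 F x hF hA
        have a2 := h3 F.reverse x ((hr x).2 hF) hA
        rw [hl] at a2
        exact ⟨hF, a1, a2⟩
      · left
        have a1 := h1 F x hF hA
        have a2 := h1 F.reverse x (fun h => hF ((hr x).1 h)) hA
        rw [hl] at a2
        omega
  rcases key u with hu | hu <;> rcases key v with hv | hv
  · omega
  · omega
  · omega
  · exact absurd ⟨hu.1, hv.1⟩ huv

theorem parity_flip (σ : ℕ → Prop) (S : ℕ → Prop) [DecidablePred S] (k : ℕ)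
    (h : ∀ n < k, (S n → (σ (n + 1) ↔ ¬ σ n)) ∧ (¬ S n → (σ (n + 1) ↔ σ n))) :
    Even ((Finset.range k).filter S).card ↔ (σ k ↔ σ 0) := by
  induction k with
  | zero => simp
  | succ k ih =>
    have ih' := ih fun n hn => h n (by omega)
    have hk := h k (by omega)
    rw [Finset.range_add_one, Finset.filter_insert]
    by_cases hS : S k
    · rw [if_pos hS, Finset.card_insert_of_notMem (by simp), Nat.even_add_one, ih', hk.1 hS]
      tauto
    · rw [if_neg hS, ih', hk.2 hS]

theorem simConj_trans {p q r : B × B} (h : SimConj cs p q) (h' : SimConj cs q r) :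
    SimConj cs p r := by
  obtain ⟨x, h1, h2⟩ := h
  obtain ⟨y, h3, h4⟩ := h'
  refine ⟨y * x, ?_, ?_⟩
  · rw [← h3, ← h1]; group
  · rw [← h4, ← h2]; group

theorem simConj_symm {p q : B × B} (h : SimConj cs p q) : SimConj cs q p := by
  obtain ⟨x, h1, h2⟩ := h
  refine ⟨x⁻¹, ?_, ?_⟩
  · rw [← h1]; group
  · rw [← h2]; group

theorem simConj_swap {a b c d : B} (h : SimConj cs (a, b) (c, d)) : SimConj cs (b, a) (d, c) := by
  obtain ⟨x, h1, h2⟩ := h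
  exact ⟨x, h2, h1⟩

end Helpers

/-- Let `C` be a directed cycle `→c_0, …, →c_k = →c_0` in the graph
`R(w)`, the arc from `→c_n` to `→c_{n+1}` being an `(s_{f n}, s_{g n})`-braid move and
colored by the simultaneous-conjugacy class `[(s_{f n}, s_{g n})]`. Fix a color
`c = [(s,t)]` with opposite `c^op = [(t,s)]`. Then the number of arcs of `C` whose color
lies in `{c, c^op}` is even; in particular, the cycle length `k` is even. -/
theorem cycle_color_even {B W : Type*} [Group W] {M : CoxeterMatrix B}
    (cs : CoxeterSystem M W) (w : W) (k : ℕ) (c : ℕ → List B) (f g : ℕ → B)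
    (hred : ∀ n ≤ k, cs.IsReduced (c n) ∧ cs.wordProd (c n) = w)
    (hcyc : c k = c 0)
    (hmove : ∀ n < k, IsBraidMove cs (f n) (g n) (c n) (c (n + 1)))
    (s t : B) (hst : s ≠ t) (hfin : M.M s t ≠ 0) :
    Even ((Finset.range k).filter
      (fun n => SimConj cs (f n, g n) (s, t) ∨ SimConj cs (f n, g n) (t, s))).card ∧
    Even k := by
  have harc : ∀ n, ∃ (α : W) (A F C : List W), n < k → (cs.leftInvSeq (c n) = A ++ F ++ C ∧
      cs.leftInvSeq (c (n + 1)) = A ++ F.reverse ++ C ∧ 2 ≤ F.length ∧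
      ∀ x, x ∈ F ↔ cs.IsReflection x ∧ α⁻¹ * x * α ∈ para cs {f n, g n}) := by
    intro n
    by_cases hn : n < k
    · obtain ⟨α, A, F, C, h⟩ := arc_structure cs (hmove n hn)
        ((hred n hn.le).2.trans (hred (n + 1) hn).2.symm)
      exact ⟨α, A, F, C, fun _ => h⟩
    · exact ⟨1, [], [], [], fun h => absurd h hn⟩
  choose α A F C harc using harc
  -- the dihedral reflection subgroup attached to an arc
  let D : ℕ → Set W := fun n => {x | (α n)⁻¹ * x * α n ∈ para cs {f n, g n}}
  have hrefl : ∀ x, cs.IsReflection x → x ≠ 1 := by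
    rintro x hx rfl
    have := hx.odd_length
    simp at this
  have hshare : ∀ n < k, ∀ n' < k, ∀ u v, cs.IsReflection u → cs.IsReflection v → u ≠ v →
      u ∈ D n → v ∈ D n → u ∈ D n' → v ∈ D n' →
      (SimConj cs (f n, g n) (f n', g n') ∨ SimConj cs (f n, g n) (g n', f n')) ∧ D n = D n' := by
    intro n _ n' _ u v hu hv huv h1 h2 h3 h4
    obtain ⟨q1, q2⟩ := main_conj cs (hrefl u hu) (hrefl v hv) huv h1 h2 h3 h4
    exact ⟨q1, Set.ext q2⟩
  have hpair : ∀ n < k, ∃ u v, u ≠ v ∧ u ∈ F n ∧ v ∈ F n := by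
    intro n hn
    obtain ⟨e1, -, e3, -⟩ := harc n hn
    have hnd := (hred n hn.le).1.nodup_leftInvSeq
    rw [e1] at hnd
    have hF : (F n).Nodup := (List.nodup_append.1 (List.nodup_append.1 hnd).1).2.1
    refine ⟨(F n)[0], (F n)[1], ?_, List.getElem_mem _, List.getElem_mem _⟩
    intro h
    have := (List.Nodup.getElem_inj_iff hF).1 h
    omega
  have hfiber : ∀ n < k, Even ((Finset.range k).filter (fun n' => D n' = D n)).card := by
    intro n hn
    obtain ⟨u, v, huv, hu, hv⟩ := hpair n hn
    have hu' := ((harc n hn).2.2.2 u).1 hu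
    have hv' := ((harc n hn).2.2.2 v).1 hv
    rw [parity_flip (fun n' => (cs.leftInvSeq (c n')).idxOf u < (cs.leftInvSeq (c n')).idxOf v)]
    · rw [hcyc]
    · intro n' hn'
      obtain ⟨e1, e2, e3, e4⟩ := harc n' hn'
      have hnd := (hred n' hn'.le).1.nodup_leftInvSeq
      simp only [e1, e2]
      rw [e1] at hnd
      constructor
      · intro hD
        have m1 : u ∈ D n' := by rw [hD]; exact hu'.2
        have m2 : v ∈ D n' := by rw [hD]; exact hv'.2
        exact flip_both hnd ((e4 u).2 ⟨hu'.1, m1⟩) ((e4 v).2 ⟨hv'.1, m2⟩) huv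
      · intro hD
        apply flip_not
        rintro ⟨m1, m2⟩
        exact hD (hshare n' hn' n hn u v hu'.1 hv'.1 huv ((e4 u).1 m1).2 ((e4 v).1 m2).2
          hu'.2 hv'.2).2
  have hmain : ∀ (Q : ℕ → Prop) [DecidablePred Q], (∀ n < k, ∀ n' < k, D n = D n' → Q n → Q n') →
      Even ((Finset.range k).filter Q).card := by
    intro Q _ hQ
    rw [Finset.card_eq_sum_card_image D]
    apply Finset.even_sum
    intro E hE
    obtain ⟨n, hn, rfl⟩ := Finset.mem_image.1 hE
    obtain ⟨hn1, hn2⟩ := Finset.mem_filter.1 hn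
    rw [Finset.mem_range] at hn1
    refine (congrArg (fun S => Even (Finset.card S)) ?_).mpr (hfiber n hn1)
    ext n'
    simp only [Finset.mem_filter, Finset.mem_range]
    constructor
    · rintro ⟨⟨h1, -⟩, h2⟩
      exact ⟨h1, h2⟩
    · rintro ⟨h1, h2⟩
      exact ⟨⟨h1, hQ n hn1 n' h1 h2.symm hn2⟩, h2⟩
  constructor
  · refine hmain (fun n => SimConj cs (f n, g n) (s, t) ∨ SimConj cs (f n, g n) (t, s)) ?_
    intro n hn n' hn' hD hQ
    obtain ⟨u, v, huv, hu, hv⟩ := hpair n hn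
    have hu' := ((harc n hn).2.2.2 u).1 hu
    have hv' := ((harc n hn).2.2.2 v).1 hv
    have m1 : u ∈ D n := hu'.2
    have m2 : v ∈ D n := hv'.2
    obtain ⟨hS, -⟩ := hshare n hn n' hn' u v hu'.1 hv'.1 huv m1 m2 (hD ▸ m1) (hD ▸ m2)
    rcases hS with hS | hS
    · have hS' := simConj_symm cs hS
      exact hQ.imp (simConj_trans cs hS') (simConj_trans cs hS')
    · have hS' := simConj_swap cs (simConj_symm cs hS)
      rcases hQ with hQ | hQ
      · exact Or.inr (simConj_trans cs (simConj_symm cs (simConj_swap cs hS)) (simConj_swap cs hQ))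
      · exact Or.inl (simConj_trans cs (simConj_symm cs (simConj_swap cs hS)) (simConj_swap cs hQ))
  · have := hmain (fun _ => True) (fun _ _ _ _ _ _ => trivial)
    simpa using this
end
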